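/- Let κ < 2^ℵ₀ be a cardinal. Suppose (X, μ) is a measure space satisfying property (Aκ), and suppose (Y, d, H^h) is a compact metric space satisfying property (H∞). If f : X → Y is a measurable surjection, then there exists a set N ⊆ X with μ(N) = 0 and H^h(f(N)) > 0. Moreover, if in addition X carries a topology with a countable basis in which points are closed, and f has the property that for every closed set F ⊆ Y the preimage f⁻¹(F) is a countable union of closed sets, then N can be chosen to be perfect. -/

import Mathlib

open MeasureTheory Set Filter Topology
open scoped NNReal ENNReal

universe u v

/-- A Hausdorff (gauge) function `h : [0,∞) → [0,∞]`: nondecreasing, right-continuous,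
and positive on positive arguments. -/
structure IsHausdorffFunction (h : ℝ≥0 → ℝ≥0∞) : Prop where
  mono : Monotone h
  right_continuous : ∀ t : ℝ≥0, ContinuousWithinAt h (Set.Ici t) t
  pos : ∀ t : ℝ≥0, 0 < t → 0 < h t

/-- `h` is of finite order: `limsup_{t→0+} h(3t)/h(t) < ∞`. -/
def FiniteOrder (h : ℝ≥0 → ℝ≥0∞) : Prop :=
  Filter.limsup (fun t : ℝ≥0 => h (3 * t) / h t) (nhdsWithin 0 (Set.Ioi 0)) < ⊤

/-- The Hausdorff (outer) measure built from the gauge `h`: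
`H^h(E) = sup_{δ>0} inf { Σ h(diam Uᵢ) : E ⊆ ⋃ Uᵢ, diam Uᵢ ≤ δ }`. -/
noncomputable def hausdorffM {Z : Type*} [EMetricSpace Z] (h : ℝ≥0 → ℝ≥0∞) :
    MeasureTheory.OuterMeasure Z :=
  MeasureTheory.OuterMeasure.mkMetric (fun d => h d.toNNReal)

/-- A set `S` is σ-finite with respect to an outer measure `μ` if it is a countable union
of Carathéodory-measurable sets of finite measure. -/
def SigmaFiniteSet {Z : Type*} (μ : MeasureTheory.OuterMeasure Z) (S : Set Z) : Prop :=
  ∃ A : ℕ → Set Z, (∀ n, μ.IsCaratheodory (A n) ∧ μ (A n) < ⊤) ∧ S = ⋃ n, A n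

/-- A metric space has finite structural dimension if for every `ξ > 0` there are `N` and
`δ₀ > 0` such that every set of diameter `δ ≤ δ₀` can be covered by `N` sets of diameter
at most `ξ·δ`. -/
def FiniteStructuralDim (Z : Type*) [EMetricSpace Z] : Prop :=
  ∀ ξ : ℝ≥0, 0 < ξ → ∃ (N : ℕ) (δ₀ : ℝ≥0), 0 < δ₀ ∧
    ∀ s : Set Z, EMetric.diam s ≤ δ₀ →
      ∃ U : Fin N → Set Z, s ⊆ ⋃ i, U i ∧ ∀ i, EMetric.diam (U i) ≤ ξ * EMetric.diam s

/-- Property (H) for a subspace `Y` of the complete separable metric space `Z`. -/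
structure PropertyH {Z : Type*} [MetricSpace Z] (Y : Set Z) (h : ℝ≥0 → ℝ≥0∞) : Prop where
  complete : CompleteSpace Z
  separable : TopologicalSpace.SeparableSpace Z
  analytic : MeasureTheory.AnalyticSet Y
  hausdorff : IsHausdorffFunction h
  cont : Continuous h
  zero : h 0 = 0
  alt : FiniteOrder h ∨ FiniteStructuralDim Z ∨ ∀ x y z : Z, dist x z ≤ max (dist x y) (dist y z)

/-- Property (H∞): property (H) together with non-σ-finiteness of `Y` w.r.t. `H^h`. -/
def PropertyHInf {Z : Type*} [MetricSpace Z] (Y : Set Z) (h : ℝ≥0 → ℝ≥0∞) : Prop :=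
  PropertyH Y h ∧ ¬ SigmaFiniteSet (hausdorffM h) Y

/-- Property (Aκ): `X` is a union of κ-many measurable sets of finite measure, and
κ-many null sets always union to a null set. -/
def PropertyA {X : Type u} (μ : MeasureTheory.OuterMeasure X) (κ : Cardinal.{u}) : Prop :=
  (∃ (ι : Type u) (A : ι → Set X), Cardinal.mk ι = κ ∧ (⋃ i, A i) = Set.univ ∧
      ∀ i, μ.IsCaratheodory (A i) ∧ μ (A i) < ⊤) ∧
  ∀ (ι : Type u) (A : ι → Set X), Cardinal.mk ι = κ → (∀ i, μ (A i) = 0) → μ (⋃ i, A i) = 0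

/-- A set is perfect if it is closed and every open set meeting it meets it in an
infinite set. -/
def PerfectSet {X : Type*} [TopologicalSpace X] (C : Set X) : Prop :=
  IsClosed C ∧ ∀ O : Set X, IsOpen O → (O ∩ C).Nonempty → (O ∩ C).Infinite

/-- The gauge `d ↦ d^s`. -/
noncomputable def sGauge (s : ℝ≥0) : ℝ≥0 → ℝ≥0∞ := fun d => (d : ℝ≥0∞) ^ (s : ℝ)

/-- Hausdorff–Besicovitch dimension: the supremum of all `s ≥ 0` with `H^{d^s}(E) > 0`. -/
noncomputable def hDim {Z : Type*} [EMetricSpace Z] (E : Set Z) : ℝ≥0∞ :=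
  ⨆ (s : ℝ≥0) (_ : 0 < hausdorffM (sGauge s) E), (s : ℝ≥0∞)

/-- finite disjoint greedy subfamily -/
lemma greedy {K : Type v} (d : Set K → ℝ) (s : Finset (Set K)) (hne : ∀ U ∈ s, U.Nonempty) :
    ∃ B ⊆ s, (∀ U ∈ B, ∀ V ∈ B, U ≠ V → Disjoint U V) ∧
      ∀ U ∈ s, ∃ V ∈ B, (U ∩ V).Nonempty ∧ d U ≤ d V := by
  classical
  induction' hn : s.card using Nat.strong_induction_on with n ih generalizing s
  rcases s.eq_empty_or_nonempty with rfl | hs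
  · exact ⟨∅, by simp, by simp, by simp⟩
  obtain ⟨W, hW, hWm⟩ := s.exists_max_image d hs
  set s' := s.filter (fun U => Disjoint U W) with hs'
  have hWs' : W ∉ s' := by
    simp only [hs', Finset.mem_filter, not_and]
    intro _ h
    exact (hne W hW).ne_empty (disjoint_self.1 h)
  have hss : s' ⊂ s := by
    refine (Finset.filter_subset _ _).ssubset_of_ne ?_
    intro h; rw [← hs'] at h; rw [h] at hWs'; exact hWs' hW
  obtain ⟨B, hB, hd, hc⟩ := ih s'.card (hn ▸ Finset.card_lt_card hss) s'
    (fun U hU => hne U (hss.1 hU)) rfl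
  refine ⟨insert W B, ?_, ?_, ?_⟩
  · intro U hU
    rcases Finset.mem_insert.1 hU with rfl | h
    · exact hW
    · exact hss.1 (hB h)
  · intro U hU V hV hUV
    rcases Finset.mem_insert.1 hU with rfl | h <;> rcases Finset.mem_insert.1 hV with rfl | h'
    · exact absurd rfl hUV
    · exact ((Finset.mem_filter.1 (hB h')).2).symm
    · exact ((Finset.mem_filter.1 (hB h)).2)
    · exact hd U h V h' hUV
  · intro U hU
    by_cases h : Disjoint U W
    · obtain ⟨V, hV, h1⟩ := hc U (Finset.mem_filter.2 ⟨hU, h⟩)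
      exact ⟨V, Finset.mem_insert_of_mem hV, h1⟩
    · exact ⟨W, Finset.mem_insert_self _ _, Set.not_disjoint_iff_nonempty_inter.1 h, hWm U hU⟩

/-- weighted covers versus covers -/
lemma weighted {K : Type v} [MetricSpace K] [CompactSpace K] (g : Set K → ℝ) (g0 : ∀ U, 0 ≤ g U)
    (C c : ℝ) (hc : 0 ≤ c)
    (hD : ∀ U : Set K, ∃ (n : ℕ) (V : Fin n → Set K),
      {y | ∃ z ∈ U, dist y z ≤ Metric.diam U} ⊆ ⋃ i, V i ∧ ∑ i, g (V i) ≤ C * g U)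
    (hcov : ∀ (ι : Type v) [Fintype ι] (U : ι → Set K), (⋃ i, U i) = univ → c ≤ ∑ i, g (U i))
    (s : Finset (Set K)) (a : Set K → ℝ) (A : ℝ) (ha : ∀ U ∈ s, 0 ≤ a U)
    (hs : ∀ x, A ≤ ∑ U ∈ s, a U * U.indicator 1 x) :
    A * c ≤ C * ∑ U ∈ s, a U * g U := by
  classical
  have hC : ∀ U, 0 ≤ C * g U := by
    intro U
    obtain ⟨n, V, -, h⟩ := hD U
    exact le_trans (Finset.sum_nonneg fun i _ => g0 _) h
  have hpos : ∀ (s : Finset (Set K)) (a : Set K → ℝ), (∀ U ∈ s, 0 ≤ a U) →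
      0 ≤ C * ∑ U ∈ s, a U * g U := by
    intro s a ha
    rw [Finset.mul_sum]
    refine Finset.sum_nonneg fun U hU => ?_
    have := mul_nonneg (ha U hU) (hC U)
    linarith
  induction' hn : (s.filter (fun U => U.Nonempty ∧ 0 < a U)).card using Nat.strong_induction_on
    with n ih generalizing s a A
  rcases le_or_gt A 0 with hA | hA
  · exact (mul_nonpos_of_nonpos_of_nonneg hA hc).trans (hpos s a ha)
  set s' := s.filter (fun U => U.Nonempty ∧ 0 < a U) with hs'
  have hmem : ∀ x : K, ∃ U ∈ s', x ∈ U := by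
    intro x
    by_contra! h
    have : ∑ U ∈ s, a U * U.indicator 1 x = 0 := by
      refine Finset.sum_eq_zero fun U hU => ?_
      by_cases hx : x ∈ U
      · have : ¬ (0 < a U) := fun h0 => h U (Finset.mem_filter.2 ⟨hU, ⟨x, hx⟩, h0⟩) hx
        have : a U = 0 := le_antisymm (not_lt.1 this) (ha U hU)
        simp [this]
      · simp [hx]
    linarith [hs x]
  obtain ⟨B, hB, hBd, hBc⟩ := greedy (fun U => Metric.diam U) s'
    (fun U hU => (Finset.mem_filter.1 hU).2.1)
  have key : c ≤ ∑ U ∈ B, C * g U := by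
    choose n V hV1 hV2 using hD
    have := hcov (Σ b : B, ULift.{v} (Fin (n b))) (fun p => V p.1 p.2.down) ?_
    · refine this.trans ?_
      rw [Fintype.sum_sigma, ← Finset.sum_coe_sort B]
      refine Finset.sum_le_sum fun b _ => ?_
      refine le_trans (le_of_eq ?_) (hV2 b)
      exact Fintype.sum_equiv Equiv.ulift _ _ (fun _ => rfl)
    · refine eq_univ_of_forall fun x => ?_
      obtain ⟨U, hU, hx⟩ := hmem x
      obtain ⟨W, hW, ⟨z, hz1, hz2⟩, hd⟩ := hBc U hU
      have : x ∈ {y | ∃ z ∈ W, dist y z ≤ Metric.diam W} := by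
        refine ⟨z, hz2, le_trans ?_ hd⟩
        exact Metric.dist_le_diam_of_mem Metric.isBounded_of_compactSpace hx hz1
      obtain ⟨i, hi⟩ := mem_iUnion.1 (hV1 W this)
      exact mem_iUnion.2 ⟨⟨⟨W, hW⟩, ⟨i⟩⟩, hi⟩
  rcases B.eq_empty_or_nonempty with hBe | hBne
  · have : c = 0 := by
      subst hBe; simp at key; linarith
    rw [this, mul_zero]; exact hpos s a ha
  obtain ⟨W, hW, hWm⟩ := B.exists_min_image a hBne
  set t := a W with ht
  have htp : 0 < t := (Finset.mem_filter.1 (hB hW)).2.2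
  set a' : Set K → ℝ := fun U => a U - if U ∈ B then t else 0 with ha'
  have hBs : B ⊆ s := hB.trans (Finset.filter_subset _ _)
  have hsum : ∀ F : Set K → ℝ, ∑ U ∈ s, a U * F U = ∑ U ∈ s, a' U * F U + t * ∑ U ∈ B, F U := by
    intro F
    have : t * ∑ U ∈ B, F U = ∑ U ∈ s, (if U ∈ B then t else 0) * F U := by
      rw [Finset.mul_sum, ← Finset.sum_subset hBs]
      · exact Finset.sum_congr rfl fun U hU => by simp [hU]
      · intro U _ hU; simp [hU]
    rw [this, ← Finset.sum_add_distrib]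
    exact Finset.sum_congr rfl fun U hU => by simp only [ha']; ring
  have hle1 : ∀ x : K, ∑ U ∈ B, U.indicator (1 : K → ℝ) x ≤ 1 := by
    intro x
    by_cases hx : ∃ U ∈ B, x ∈ U
    · obtain ⟨U, hU, hxU⟩ := hx
      rw [Finset.sum_eq_single_of_mem U hU]
      · simp [hxU]
      · intro V hV hVU
        have := Set.disjoint_right.1 (hBd V hV U hU hVU) hxU
        simp [this]
    · push Not at hx
      rw [Finset.sum_eq_zero fun U hU => by simp [hx U hU]]
      exact zero_le_one
  have h1 : (A - t) * c ≤ C * ∑ U ∈ s, a' U * g U := by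
    refine ih _ ?_ s a' (A - t) ?_ ?_ rfl
    · rw [← hn]
      refine Finset.card_lt_card ?_
      rw [Finset.ssubset_iff_of_subset]
      · refine ⟨W, hB hW, ?_⟩
        simp [ha', hW, ht]
      · intro U hU
        rw [Finset.mem_filter] at hU ⊢
        refine ⟨hU.1, hU.2.1, lt_of_lt_of_le hU.2.2 ?_⟩
        simp only [ha']; split_ifs <;> linarith
    · intro U hU
      simp only [ha']
      split_ifs with h
      · linarith [hWm U h]
      · linarith [ha U hU]
    · intro x
      have h2 := hs x
      rw [hsum (fun U => U.indicator 1 x)] at h2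
      have := mul_le_mul_of_nonneg_left (hle1 x) htp.le
      linarith
  rw [hsum]
  have h2 := mul_le_mul_of_nonneg_left key htp.le
  rw [← Finset.mul_sum] at h2
  nlinarith

def costSet {K : Type v} [TopologicalSpace K] (g : Set K → ℝ) (f : K → ℝ) : Set ℝ :=
  {r | ∃ a : Set K →₀ ℝ, (∀ U, 0 ≤ a U) ∧ (∀ U ∈ a.support, IsOpen U) ∧
    (∀ x, f x ≤ a.sum fun U t => t * U.indicator 1 x) ∧ r = a.sum fun U t => t * g U}

open scoped CompactlySupported in
lemma frostman {K : Type v} [MetricSpace K] [CompactSpace K] [MeasurableSpace K] [BorelSpace K]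
    (g : Set K → ℝ) (g0 : ∀ U, 0 ≤ g U) (c : ℝ) 
    (hw : ∀ (s : Finset (Set K)) (a : Set K → ℝ), (∀ U ∈ s, 0 ≤ a U) →
      (∀ x, 1 ≤ ∑ U ∈ s, a U * U.indicator 1 x) → c ≤ ∑ U ∈ s, a U * g U) :
    ∃ ν : Measure K, IsFiniteMeasure ν ∧ ENNReal.ofReal c ≤ ν univ ∧
      ∀ U, IsOpen U → ν U ≤ ENNReal.ofReal (g U) := by
  classical
  set p : C_c(K, ℝ) → ℝ := fun f => sInf (costSet g f) with hp
  have hbdd : ∀ f : K → ℝ, ∀ r ∈ costSet g f, 0 ≤ r := by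
    rintro f r ⟨a, ha, -, -, rfl⟩
    exact Finset.sum_nonneg fun U _ => mul_nonneg (ha U) (g0 U)
  have hbb : ∀ f : K → ℝ, BddBelow (costSet g f) := fun f => ⟨0, fun r hr => hbdd f r hr⟩
  have hne : ∀ f : C_c(K, ℝ), (costSet g f).Nonempty := by
    intro f
    obtain ⟨M, hM⟩ := (isCompact_range f.continuous).bddAbove
    refine ⟨_, Finsupp.single univ (max M 0), ?_, ?_, ?_, rfl⟩
    · intro U
      rw [Finsupp.single_apply]; split_ifs <;> simp
    · intro U hU
      have := Finsupp.support_single_subset hU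
      rw [Finset.mem_singleton] at this
      rw [this]; exact isOpen_univ
    · intro x
      rw [Finsupp.sum_single_index (by simp)]
      simpa using Or.inl (hM ⟨x, rfl⟩)
  have hp0 : ∀ f, 0 ≤ p f := fun f => Real.sInf_nonneg (hbdd f)
  have hhom1 : ∀ r : ℝ, 0 < r → ∀ f, p (r • f) ≤ r * p f := by
    intro r hr f
    have : ∀ v ∈ costSet g f, r⁻¹ * p (r • f) ≤ v := by
      rintro v ⟨a, ha, ho, hf, rfl⟩
      have : r * (a.sum fun U t => t * g U) ∈ costSet g (r • f : C_c(K, ℝ)) := by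
        refine ⟨r • a, ?_, ?_, ?_, ?_⟩
        · intro U; exact mul_nonneg hr.le (ha U)
        · intro U hU; exact ho U (Finsupp.support_smul hU)
        · intro x
          rw [Finsupp.sum_smul_index (by simp)]
          have := mul_le_mul_of_nonneg_left (hf x) hr.le
          rw [Finsupp.mul_sum] at this
          simpa [mul_assoc] using this
        · rw [Finsupp.sum_smul_index (by simp), Finsupp.mul_sum]
          simp [mul_assoc]
      have h2 := csInf_le (hbb _) this
      rw [inv_mul_le_iff₀ hr]
      exact h2
    have := le_csInf (hne f) this
    rwa [inv_mul_le_iff₀ hr] at this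
  have hhom : ∀ r : ℝ, 0 < r → ∀ f, p (r • f) = r * p f := by
    intro r hr f
    refine le_antisymm (hhom1 r hr f) ?_
    have := hhom1 r⁻¹ (inv_pos.2 hr) (r • f)
    rw [smul_smul, inv_mul_cancel₀ hr.ne', one_smul] at this
    rwa [le_inv_mul_iff₀ hr] at this
  have hadd : ∀ f f', p (f + f') ≤ p f + p f' := by
    intro f f'
    have h1 : ∀ v ∈ costSet g f, ∀ v' ∈ costSet g f', p (f + f') ≤ v + v' := by
      rintro v ⟨a, ha, ho, hf, rfl⟩ v' ⟨a', ha', ho', hf', rfl⟩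
      refine csInf_le (hbb _) ⟨a + a', ?_, ?_, ?_, ?_⟩
      · intro U; exact add_nonneg (ha U) (ha' U)
      · intro U hU
        rcases Finset.mem_union.1 (Finsupp.support_add hU) with h | h
        · exact ho U h
        · exact ho' U h
      · intro x
        rw [Finsupp.sum_add_index' (by simp) (by intros; ring)]
        exact add_le_add (hf x) (hf' x)
      · rw [Finsupp.sum_add_index' (by simp) (by intros; ring)]
    have h2 : ∀ v ∈ costSet g f, p (f + f') - v ≤ p f' := by
      intro v hv
      exact le_csInf (hne f') fun v' hv' => by linarith [h1 v hv v' hv']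
    have h3 : p (f + f') - p f' ≤ p f := le_csInf (hne f) fun v hv => by linarith [h2 v hv]
    linarith
  have hle : ∀ (f : C_c(K, ℝ)) (U : Set K), IsOpen U → (∀ x, f x ≤ U.indicator 1 x) →
      p f ≤ g U := by
    intro f U hU hf
    refine csInf_le (hbb _) ⟨Finsupp.single U 1, ?_, ?_, ?_, ?_⟩
    · intro V
      rw [Finsupp.single_apply]; split_ifs <;> simp
    · intro V hV
      have := Finsupp.support_single_subset hV
      rw [Finset.mem_singleton] at this
      rwa [this]
    · intro x
      rw [Finsupp.sum_single_index (by simp), one_mul]; exact hf x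
    · rw [Finsupp.sum_single_index (by simp), one_mul]
  have hneg : ∀ f : C_c(K, ℝ), (∀ x, f x ≤ 0) → p f ≤ 0 := by
    intro f hf
    exact csInf_le (hbb _) ⟨0, by simp, by simp, by simpa using hf, by simp⟩
  let e : C_c(K, ℝ) := ⟨⟨fun _ => 1, continuous_const⟩, HasCompactSupport.of_compactSpace _⟩
  have he : ∀ x, e x = 1 := fun x => rfl
  have hpe : c ≤ p e := by
    refine le_csInf (hne e) ?_
    rintro v ⟨a, ha, ho, hf, rfl⟩
    exact hw a.support a (fun U _ => ha U) (fun x => hf x)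
  obtain ⟨ℓ, hℓe, hℓ⟩ : ∃ ℓ : C_c(K, ℝ) →ₗ[ℝ] ℝ, p e ≤ ℓ e ∧ ∀ f, ℓ f ≤ p f := by
    by_cases hez : e = 0
    · refine ⟨0, ?_, fun f => hp0 f⟩
      have : p e ≤ 0 := hneg e (fun x => by rw [hez]; simp)
      simpa using this
    obtain ⟨ℓ, h1, h2⟩ := exists_extension_of_le_sublinear
      (LinearPMap.mkSpanSingleton e (p e) hez) p hhom hadd (by
        rintro ⟨x, hx⟩
        obtain ⟨r, rfl⟩ := Submodule.mem_span_singleton.1 hx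
        rw [LinearPMap.mkSpanSingleton'_apply]
        rcases lt_trichotomy r 0 with hr | rfl | hr
        · exact (mul_nonpos_of_nonpos_of_nonneg hr.le (hp0 e)).trans (hp0 _)
        · simpa using hp0 _
        · exact (hhom r hr e).ge)
    refine ⟨ℓ, ?_, h2⟩
    have := h1 ⟨e, Submodule.mem_span_singleton_self e⟩
    rw [LinearPMap.mkSpanSingleton_apply] at this
    exact this.ge
  have hℓpos : ∀ f : C_c(K, ℝ), 0 ≤ f → 0 ≤ ℓ f := by
    intro f hf
    have := (hℓ (-f)).trans (hneg (-f) (fun x => by simpa using hf x))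
    simpa using this
  let Λ : C_c(K, ℝ) →ₚ[ℝ] ℝ := PositiveLinearMap.mk₀ ℓ hℓpos
  have hΛ : ∀ f, Λ f = ℓ f := fun f => rfl
  set ν := RealRMK.rieszMeasure Λ with hν
  refine ⟨ν, inferInstance, ?_, ?_⟩
  · have h := RealRMK.le_rieszMeasure_tsupport_subset Λ (f := e) (by simp [he]) (subset_univ _)
    refine le_trans (ENNReal.ofReal_le_ofReal ?_) h
    rw [hΛ]; linarith
  · intro U hU
    rw [hU.measure_eq_iSup_isCompact]
    refine iSup₂_le fun L hL => iSup_le fun hLc => ?_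
    obtain ⟨f, hf1, hf2, -, hf3⟩ := exists_continuous_one_zero_of_isCompact hLc hU.isClosed_compl
      (disjoint_compl_right_iff_subset.2 hL)
    let f' : C_c(K, ℝ) := ⟨f, HasCompactSupport.of_compactSpace _⟩
    have hf' : ∀ x, f' x = f x := fun x => rfl
    have h := RealRMK.rieszMeasure_le_of_eq_one Λ (f := f') (fun x => (hf3 x).1) hLc
      (fun x hx => hf1 hx)
    refine h.trans (ENNReal.ofReal_le_ofReal ?_)
    rw [hΛ]
    refine (hℓ f').trans (hle f' U hU fun x => ?_)
    by_cases hx : x ∈ U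
    · simpa [hx, hf'] using (hf3 x).2
    · simpa [hx, hf'] using (hf2 hx).le
lemma half_set {K : Type v} [MeasurableSpace K] [StandardBorelSpace K] (ν : Measure K)
    [IsFiniteMeasure ν] (hat : ∀ x, ν {x} = 0) (Q : Set K) (hQ : MeasurableSet Q) :
    ∃ A ⊆ Q, MeasurableSet A ∧ ν A = ν Q / 2 ∧ ν (Q \ A) = ν Q / 2 := by
  set e := embeddingReal K with he
  have hem : MeasurableEmbedding e := measurableEmbedding_embeddingReal K
  set m := (ν.restrict Q).map e with hm
  have hmuniv : m univ = ν Q := by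
    rw [hm, Measure.map_apply hem.measurable MeasurableSet.univ]; simp
  have hIic : ∀ t, m (Iic t) = ν (Q ∩ e ⁻¹' Iic t) := by
    intro t
    rw [hm, Measure.map_apply hem.measurable measurableSet_Iic,
      Measure.restrict_apply (hem.measurable measurableSet_Iic), inter_comm]
  have : IsFiniteMeasure m := ⟨by rw [hmuniv]; exact measure_lt_top _ _⟩
  have : NullSingletonClass m := ⟨by
    intro t
    rw [hm, Measure.map_apply hem.measurable (measurableSet_singleton t)]
    have hsub : (e ⁻¹' {t}).Subsingleton := by
      intro a ha b hb
      exact hem.injective (ha.trans hb.symm)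
    refine le_antisymm ((Measure.restrict_apply_le _ _).trans ?_) zero_le
    rcases hsub.eq_empty_or_singleton with h | ⟨x, h⟩
    · rw [h]; simp
    · rw [h, hat]⟩
  have key : ∃ t, m (Iic t) = ν Q / 2 := by
    rcases eq_or_ne (ν Q) 0 with h0 | h0
    · refine ⟨0, ?_⟩
      rw [h0, ENNReal.zero_div]
      exact le_antisymm ((measure_mono (subset_univ _)).trans (by rw [hmuniv, h0])) zero_le
    have hcont : Continuous fun t => m.real (Iic t) := by
      have h1 := intervalIntegral.continuous_primitive (μ := m) (f := fun _ => (1:ℝ))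
        (fun a b => (integrable_const (μ := m) (1:ℝ)).intervalIntegrable) 0
      have h2 : (fun t => m.real (Iic t)) = fun t => m.real (Iic 0) + ∫ x in (0:ℝ)..t, (1:ℝ) ∂m := by
        funext t
        have := intervalIntegral.integral_Iic_sub_Iic (μ := m) (f := fun _ => (1:ℝ)) (a := 0) (b := t)
          (integrable_const _).integrableOn (integrable_const _).integrableOn
        rw [← this]
        simp
      rw [h2]; exact continuous_const.add h1
    have hlt : ν Q / 2 < ν Q := ENNReal.half_lt_self h0 (measure_ne_top _ _)
    have hup : ∃ t, ν Q / 2 < m (Iic t) := by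
      have := tendsto_measure_Iic_atTop m
      rw [hmuniv] at this
      exact (this.eventually (lt_mem_nhds hlt)).exists
    have hdn : ∃ t, m (Iic t) ≤ ν Q / 2 := by
      have := tendsto_measure_Ici_atBot m
      rw [hmuniv] at this
      obtain ⟨t, ht⟩ := (this.eventually (lt_mem_nhds hlt)).exists
      refine ⟨t, ?_⟩
      rw [← measure_congr (Iio_ae_eq_Iic (μ := m) (a := t))]
      have h3 : m (Iio t) + m (Ici t) = ν Q := by
        rw [← hmuniv, ← compl_Iio]; exact measure_add_measure_compl measurableSet_Iio
      by_contra! hcon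
      have h4 := ENNReal.add_lt_add hcon ht
      rw [ENNReal.add_halves, h3] at h4
      exact lt_irrefl _ h4
    obtain ⟨t1, h1⟩ := hup
    obtain ⟨t2, h2⟩ := hdn
    have hfin : ν Q / 2 ≠ ⊤ := (hlt.trans (measure_lt_top _ _)).ne
    obtain ⟨t, ht⟩ := mem_range_of_exists_le_of_exists_ge hcont
      (c := (ν Q / 2).toReal)
      ⟨t2, ENNReal.toReal_mono hfin h2⟩ ⟨t1, ENNReal.toReal_mono (measure_ne_top _ _) h1.le⟩
    exact ⟨t, (ENNReal.toReal_eq_toReal_iff' (measure_ne_top _ _) hfin).1 ht⟩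
  obtain ⟨t, ht⟩ := key
  have hA : MeasurableSet (Q ∩ e ⁻¹' Iic t) := hQ.inter (hem.measurable measurableSet_Iic)
  have hA2 : ν (Q ∩ e ⁻¹' Iic t) = ν Q / 2 := by rw [← hIic, ht]
  refine ⟨_, inter_subset_left, hA, hA2, ?_⟩
  rw [measure_sdiff inter_subset_left hA.nullMeasurableSet (measure_ne_top _ _), hA2]
  exact ENNReal.sub_half (measure_ne_top _ _)

lemma split_set {K : Type v} [MetricSpace K] [CompactSpace K] [MeasurableSpace K] [BorelSpace K]
    (ν : Measure K)
    [IsFiniteMeasure ν] (hat : ∀ x, ν {x} = 0) (s : Set K) (hs : MeasurableSet s) (η : ℝ)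
    (hη : 0 < η) :
    ∃ A B : Set K, A ⊆ s ∧ B ⊆ s ∧ MeasurableSet A ∧ MeasurableSet B ∧ Disjoint A B ∧
      ν A = ν s / 2 ∧ ν B = ν s / 2 ∧
      (∀ U, ν (A ∩ U) ≤ ν (s ∩ Metric.thickening η U) / 2) ∧
      (∀ U, ν (B ∩ U) ≤ ν (s ∩ Metric.thickening η U) / 2) := by
  rcases isEmpty_or_nonempty K with hK | hK
  · refine ⟨∅, ∅, by simp, by simp, by simp, by simp, by simp, ?_, ?_, by simp, by simp⟩ <;>
    · rw [Set.eq_empty_of_isEmpty s]; simp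
  set Q : ℕ → Set K := disjointed fun n => Metric.ball (TopologicalSpace.denseSeq K n) (η / 2) with hQ
  have hQm : ∀ n, MeasurableSet (Q n) := fun n =>
    MeasurableSet.disjointed (fun _ => Metric.isOpen_ball.measurableSet) n
  have hQd : Pairwise (Function.onFun Disjoint Q) := disjoint_disjointed _
  have hQu : ⋃ n, Q n = univ := by
    rw [hQ, iUnion_disjointed]
    refine eq_univ_of_forall fun x => ?_
    obtain ⟨n, hn⟩ := Metric.denseRange_iff.1 (TopologicalSpace.denseRange_denseSeq K) x (η/2)
      (by positivity)
    exact mem_iUnion.2 ⟨n, hn⟩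
  have hQη : ∀ n, ∀ x ∈ Q n, ∀ y ∈ Q n, dist x y < η := by
    intro n x hx y hy
    have h1 := disjointed_subset _ n hx
    have h2 := disjointed_subset _ n hy
    rw [Metric.mem_ball] at h1 h2
    linarith [dist_triangle_right x y (TopologicalSpace.denseSeq K n)]
  choose A hAs hAm hA1 hA2 using fun n => half_set ν hat (s ∩ Q n) (hs.inter (hQm n))
  have hRd : Pairwise (Function.onFun Disjoint fun n => s ∩ Q n) := fun i j hij =>
    (hQd hij).mono inter_subset_right inter_subset_right
  have gen : ∀ A : ℕ → Set K, (∀ n, A n ⊆ s ∩ Q n) → (∀ n, MeasurableSet (A n)) →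
      (∀ n, ν (A n) = ν (s ∩ Q n) / 2) →
      ν (⋃ n, A n) = ν s / 2 ∧ ∀ U, ν ((⋃ n, A n) ∩ U) ≤ ν (s ∩ Metric.thickening η U) / 2 := by
    intro A hAs hAm hA
    have hJ : ∀ J : Set ℕ, ν (⋃ n ∈ J, A n) = ν (⋃ n ∈ J, s ∩ Q n) / 2 := by
      intro J
      rw [measure_biUnion J.to_countable _ (fun n _ => hAm n),
        measure_biUnion J.to_countable _ (fun n _ => hs.inter (hQm n))]
      · simp only [hA, div_eq_mul_inv]
        rw [ENNReal.tsum_mul_right]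
      · exact fun i _ j _ hij => hRd hij
      · exact fun i _ j _ hij => (hRd hij).mono (hAs i) (hAs j)
    constructor
    · have := hJ univ
      simp only [mem_univ, iUnion_true] at this
      rw [this, ← inter_iUnion, hQu, inter_univ]
    · intro U
      refine le_trans (measure_mono ?_) ((hJ {n | (Q n ∩ U).Nonempty}).trans_le ?_)
      · rintro x ⟨hx, hxU⟩
        obtain ⟨n, hn⟩ := mem_iUnion.1 hx
        exact mem_biUnion (show n ∈ {n | (Q n ∩ U).Nonempty} from ⟨x, (hAs n hn).2, hxU⟩) hn
      · refine ENNReal.div_le_div_right (measure_mono ?_) _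
        refine iUnion₂_subset fun n hn x hx => ⟨hx.1, ?_⟩
        obtain ⟨y, hy, hyU⟩ := hn
        exact Metric.mem_thickening_iff.2 ⟨y, hyU, hQη n x hx.2 y hy⟩
  have gA := gen A hAs hAm hA1
  have gB := gen (fun n => (s ∩ Q n) \ A n) (fun n => sdiff_subset)
    (fun n => (hs.inter (hQm n)).diff (hAm n)) hA2
  refine ⟨_, _, ?_, ?_, MeasurableSet.iUnion hAm,
    MeasurableSet.iUnion fun n => (hs.inter (hQm n)).diff (hAm n), ?_, gA.1, gB.1, gA.2, gB.2⟩
  · exact iUnion_subset fun n => (hAs n).trans inter_subset_left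
  · exact iUnion_subset fun n => sdiff_subset.trans inter_subset_left
  · rw [disjoint_iUnion_left]
    intro i
    rw [disjoint_iUnion_right]
    intro j
    rcases eq_or_ne i j with rfl | hij
    · exact disjoint_sdiff_right
    · exact (hRd hij).mono (hAs i) sdiff_subset
lemma thick_cost {K : Type v} [MetricSpace K] [CompactSpace K] (g : ℝ → ℝ) (hg : Continuous g)
    (t : Set K) (ε : ℝ≥0∞) (hε : ε ≠ 0) :
    ∃ η : ℝ, 0 < η ∧ ENNReal.ofReal (g (Metric.diam (Metric.thickening η t))) ≤
      ENNReal.ofReal (g (Metric.diam t)) + ε := by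
  have hc : ContinuousAt (fun r => ENNReal.ofReal (g r)) (Metric.diam t) :=
    (ENNReal.continuous_ofReal.comp hg).continuousAt
  have h1 : ∀ᶠ r in 𝓝 (Metric.diam t), ENNReal.ofReal (g r) ≤ ENNReal.ofReal (g (Metric.diam t)) + ε := by
    refine hc.eventually (ge_mem_nhds (ENNReal.lt_add_right ENNReal.ofReal_ne_top hε))
  obtain ⟨ρ, hρ, hb⟩ := Metric.eventually_nhds_iff.1 h1
  refine ⟨ρ / 4, by positivity, hb ?_⟩
  have h2 := Metric.diam_thickening_le t (ε := ρ / 4) (by positivity)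
  have h3 : Metric.diam t ≤ Metric.diam (Metric.thickening (ρ/4) t) :=
    Metric.diam_mono (Metric.self_subset_thickening (by positivity) _) Metric.isBounded_of_compactSpace
  rw [Real.dist_eq, abs_of_nonneg (by linarith)]
  linarith

lemma ediam_eq {K : Type v} [MetricSpace K] [CompactSpace K] (t : Set K) :
    (Metric.ediam t) = ENNReal.ofReal (Metric.diam t) ∧ Metric.ediam t ≠ ⊤ ∧
      (Metric.ediam t).toReal = Metric.diam t := by
  have h : Metric.ediam t ≠ ⊤ := (Metric.isBounded_of_compactSpace (s := t)).ediam_ne_top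
  refine ⟨?_, h, rfl⟩
  rw [Metric.diam, ENNReal.ofReal_toReal h]

lemma tree_step {K : Type v} [MetricSpace K] [CompactSpace K] [MeasurableSpace K] [BorelSpace K]
    (H : ℝ → ℝ) (Hc : Continuous H) (Hm : Monotone H) (Hp : ∀ t, 0 < t → 0 < H t) (H0 : H 0 = 0)
    (ν : Measure K) [IsFiniteMeasure ν] (hat : ∀ x, ν {x} = 0)
    (h2 : ∀ ε : ℝ, 0 < ε → ∃ δ : ℝ, 0 < δ ∧ ∀ U : Set K, IsOpen U → Metric.diam U < δ →
      ν U ≤ ENNReal.ofReal (ε * H (Metric.diam U)))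
    (a : ℝ≥0∞) (Inv : ℕ → Set K → Prop)
    (hInv : ∀ k s, Inv k s ↔ (IsCompact s ∧ a < 2 ^ k * ν s ∧ ∃ C : ℝ, 1 ≤ C ∧ C < 2 ∧
      ∀ U, IsOpen U → 2 ^ k * ν (s ∩ U) ≤ ENNReal.ofReal (C * H (Metric.diam U))))
    (k : ℕ) (s : Set K) (hs : Inv k s) :
    ∃ A B : Set K, A ⊆ s ∧ B ⊆ s ∧ Disjoint A B ∧ Inv (k+1) A ∧ Inv (k+1) B := by
  obtain ⟨hsc, has, C, hC1, hC2, hC⟩ := (hInv k s).1 hs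
  have Hnn : ∀ t, 0 ≤ t → 0 ≤ H t := fun t ht => H0 ▸ Hm ht
  obtain ⟨δ, hδ, hδν⟩ := h2 (1 / 2 ^ (k+1)) (by positivity)
  set C' := (C + 2) / 2 with hC'
  have hκ : 0 < (C' / C - 1) * H δ := by
    refine mul_pos ?_ (Hp δ hδ)
    rw [sub_pos, one_lt_div (by linarith)]; linarith
  obtain ⟨η', hη', hU⟩ := Metric.uniformContinuousOn_iff.1
    ((isCompact_Icc (a := (0:ℝ)) (b := Metric.diam (univ : Set K) + 1)).uniformContinuousOn_of_continuous
      Hc.continuousOn) _ hκ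
  set η := min (η' / 4) (1 / 4) with hη
  have hηp : 0 < η := by positivity
  have hη1 : η ≤ η' / 4 := min_le_left _ _
  have hη2 : η ≤ 1 / 4 := min_le_right _ _
  obtain ⟨A, B, hAs, hBs, hAm, hBm, hAB, hA1, hB1, hA2, hB2⟩ :=
    split_set ν hat s hsc.measurableSet η hηp
  have hhalf : ∀ z : ℝ≥0∞, 2 ^ (k+1) * (z / 2) = 2 ^ k * z := by
    intro z
    rw [pow_succ, mul_assoc, ENNReal.mul_div_cancel (by simp) (by simp)]
  have gen : ∀ A, A ⊆ s → MeasurableSet A → ν A = ν s / 2 →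
      (∀ U, ν (A ∩ U) ≤ ν (s ∩ Metric.thickening η U) / 2) → ∃ A' ⊆ A, Inv (k+1) A' := by
    intro A hAs hAm hA1 hA2
    have hlt : a / 2 ^ (k+1) < ν A := by
      rw [ENNReal.div_lt_iff (by simp) (by simp), hA1, mul_comm, hhalf]
      exact has
    obtain ⟨A', hA'A, hA'c, hA'⟩ := hAm.exists_lt_isCompact_of_ne_top (measure_ne_top _ _) hlt
    refine ⟨A', hA'A, (hInv _ _).2 ⟨hA'c, ?_, C', by linarith, by linarith, ?_⟩⟩
    · rw [ENNReal.div_lt_iff (by simp) (by simp), mul_comm] at hA'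
      exact hA'
    · intro U hUo
      have hHU := Hnn _ (Metric.diam_nonneg (s := U))
      rcases lt_or_ge (Metric.diam U) δ with hd | hd
      · have h3 := hδν U hUo hd
        calc 2 ^ (k+1) * ν (A' ∩ U) ≤ 2 ^ (k+1) * ENNReal.ofReal (1 / 2 ^ (k+1) * H (Metric.diam U)) := by
              gcongr; exact (measure_mono inter_subset_right).trans h3
          _ = ENNReal.ofReal (2 ^ (k+1) * (1 / 2 ^ (k+1) * H (Metric.diam U))) := by
              rw [ENNReal.ofReal_mul (p := 2 ^ (k+1)) (by positivity), ENNReal.ofReal_pow (by norm_num)]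
              simp
          _ ≤ _ := by
              apply ENNReal.ofReal_le_ofReal
              rw [← mul_assoc, mul_one_div_cancel (by positivity)]
              nlinarith
      · calc 2 ^ (k+1) * ν (A' ∩ U) ≤ 2 ^ (k+1) * (ν (s ∩ Metric.thickening η U) / 2) := by
              gcongr; exact (measure_mono (inter_subset_inter_left _ hA'A)).trans (hA2 U)
          _ = 2 ^ k * ν (s ∩ Metric.thickening η U) := hhalf _
          _ ≤ ENNReal.ofReal (C * H (Metric.diam (Metric.thickening η U))) :=
              hC _ Metric.isOpen_thickening
          _ ≤ _ := by
              apply ENNReal.ofReal_le_ofReal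
              have h4 := Metric.diam_thickening_le U (ε := η) hηp.le
              have h5 : Metric.diam U ≤ Metric.diam (univ : Set K) :=
                Metric.diam_mono (subset_univ _) Metric.isBounded_of_compactSpace
              have h0 := Metric.diam_nonneg (s := U)
              have h6 := hU (Metric.diam U + 2 * η) ⟨by positivity, by linarith⟩ (Metric.diam U)
                ⟨h0, by linarith⟩ (by
                  rw [Real.dist_eq, abs_of_nonneg (by linarith)]; linarith)
              rw [Real.dist_eq] at h6
              have h7 := (le_abs_self _).trans h6.le
              have h8 := Hm h4
              have h9 := Hm hd
              have hcc : C * (C' / C) = C' := by field_simp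
              have h10 : H (Metric.diam (Metric.thickening η U)) ≤ (C' / C) * H (Metric.diam U) := by
                have : 0 ≤ C' / C - 1 := by
                  rw [sub_nonneg, one_le_div (by linarith)]; linarith
                nlinarith
              calc C * H (Metric.diam (Metric.thickening η U)) ≤ C * ((C' / C) * H (Metric.diam U)) := by
                    gcongr
                _ = _ := by rw [← mul_assoc, hcc]
  obtain ⟨A', hA', hiA⟩ := gen A hAs hAm hA1 hA2
  obtain ⟨B', hB', hiB⟩ := gen B hBs hBm hB1 hB2
  exact ⟨A', B', hA'.trans hAs, hB'.trans hBs, hAB.mono hA' hB', hiA, hiB⟩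

lemma tree {K : Type v} [MetricSpace K] [CompactSpace K] [MeasurableSpace K] [BorelSpace K]
    (H : ℝ → ℝ) (Hc : Continuous H) (Hm : Monotone H) (Hp : ∀ t, 0 < t → 0 < H t) (H0 : H 0 = 0)
    (m : ℝ≥0∞ → ℝ≥0∞) (hm : ∀ d, d ≠ ⊤ → m d = ENNReal.ofReal (H d.toReal))
    (ν : Measure K) [IsFiniteMeasure ν] (hν0 : ν univ ≠ 0)
    (h1 : ∀ U : Set K, IsOpen U → ν U ≤ ENNReal.ofReal (H (Metric.diam U)))
    (h2 : ∀ ε : ℝ, 0 < ε → ∃ δ : ℝ, 0 < δ ∧ ∀ U : Set K, IsOpen U → Metric.diam U < δ →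
      ν U ≤ ENNReal.ofReal (ε * H (Metric.diam U))) :
    ∃ T : (ℕ → Bool) → Set K, (∀ x, IsCompact (T x)) ∧ (∀ x y, x ≠ y → Disjoint (T x) (T y)) ∧
      ∀ x, 0 < (Measure.mkMetric m : Measure K) (T x) := by
  classical
  have Hnn : ∀ t, 0 ≤ t → 0 ≤ H t := fun t ht => H0 ▸ Hm ht
  have hat : ∀ x, ν {x} = 0 := by
    intro x
    refine le_antisymm (le_of_forall_pos_le_add fun ε hε => ?_) zero_le
    obtain ⟨η, hη, hle⟩ := thick_cost H Hc ({x} : Set K) ε hε.ne'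
    rw [Metric.diam_singleton, H0, ENNReal.ofReal_zero] at hle
    exact ((measure_mono (Metric.self_subset_thickening hη _)).trans
      (h1 _ Metric.isOpen_thickening)).trans hle
  obtain ⟨a, ha0, ha⟩ := exists_between (pos_iff_ne_zero.2 hν0)
  set Inv : ℕ → Set K → Prop := fun k s => (IsCompact s ∧ a < 2 ^ k * ν s ∧ ∃ C : ℝ, 1 ≤ C ∧ C < 2 ∧
      ∀ U, IsOpen U → 2 ^ k * ν (s ∩ U) ≤ ENNReal.ofReal (C * H (Metric.diam U))) with hInv
  have h00 : Inv 0 univ := by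
    refine ⟨isCompact_univ, by simpa using ha, 1, le_rfl, by norm_num, fun U hU => ?_⟩
    simpa using h1 U hU
  choose L R hL hR hd hiL hiR using tree_step H Hc Hm Hp H0 ν hat h2 a Inv (fun _ _ => Iff.rfl)
  let T : (ℕ → Bool) → (n : ℕ) → {s // Inv n s} := fun x n =>
    Nat.rec ⟨univ, h00⟩ (fun n s => if x n then ⟨L n s.1 s.2, hiL n s.1 s.2⟩ else
      ⟨R n s.1 s.2, hiR n s.1 s.2⟩) n
  have hTs : ∀ x n, T x (n+1) = if x n then ⟨L n (T x n).1 (T x n).2, hiL n _ _⟩ else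
      ⟨R n (T x n).1 (T x n).2, hiR n _ _⟩ := fun x n => rfl
  have hTsub : ∀ x n, (T x (n+1)).1 ⊆ (T x n).1 := by
    intro x n
    rw [hTs]; split_ifs
    · exact hL _ _ _
    · exact hR _ _ _
  have hTanti : ∀ x, Antitone fun n => (T x n).1 := fun x => antitone_nat_of_succ_le (hTsub x)
  have hTeq : ∀ x y n, (∀ i < n, x i = y i) → T x n = T y n := by
    intro x y n
    induction n with
    | zero => intro _; rfl
    | succ n ih =>
      intro h
      rw [hTs, hTs, ih (fun i hi => h i (by omega)), h n (by omega)]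
  refine ⟨fun x => ⋂ n, (T x n).1, ?_, ?_, ?_⟩
  · intro x
    exact (isClosed_iInter fun n => (T x n).2.1.isClosed).isCompact
  · intro x y hxy
    have hex : ∃ n, x n ≠ y n := by
      by_contra! h; exact hxy (funext h)
    have hn := Nat.find_spec hex
    have hlt : ∀ i < Nat.find hex, x i = y i := fun i hi => by
      have := Nat.find_min hex hi; push Not at this; exact this
    set n := Nat.find hex
    have he := hTeq x y n hlt
    have : Disjoint (T x (n+1)).1 (T y (n+1)).1 := by
      rw [hTs, hTs, he]
      rcases hx : x n <;> rcases hy : y n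
      · exact absurd (hx.trans hy.symm) hn
      · simpa using (hd n _ _).symm
      · simpa using (hd n _ _)
      · exact absurd (hx.trans hy.symm) hn
    exact Disjoint.mono (iInter_subset (fun n => (T x n).1) (n+1)) (iInter_subset (fun n => (T y n).1) (n+1)) this
  · intro x
    by_contra hcon
    have hz : (Measure.mkMetric m : Measure K) (⋂ n, (T x n).1) = 0 := by simpa using hcon
    rw [Measure.mkMetric_apply] at hz
    have hz1 := le_of_eq hz
    have hz2 := (iSup₂_le_iff.1 hz1) 1 one_pos
    have ha4 : (0 : ℝ≥0∞) < a / 4 := ENNReal.div_pos ha0.ne' (by simp)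
    have hatop : a ≠ ⊤ := (ha.trans (measure_lt_top _ _)).ne
    have hz3 := lt_of_le_of_lt hz2 ha4
    simp only [iInf_lt_iff] at hz3
    obtain ⟨t, hcov, hdt, hsum⟩ := hz3
    obtain ⟨ε, hε, hεs⟩ := ENNReal.exists_pos_sum_of_countable' ha4.ne' ℕ
    choose η hη hηc using fun n => thick_cost H Hc (t n) (ε n) (hε n).ne'
    set O := fun n => Metric.thickening (η n) (t n) with hO
    have hOsum : ∑' n, ENNReal.ofReal (H (Metric.diam (O n))) ≤ a / 2 := by
      calc ∑' n, ENNReal.ofReal (H (Metric.diam (O n)))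
          ≤ ∑' n, ((⨆ _ : (t n).Nonempty, m (Metric.ediam (t n))) + ε n) := by
            refine ENNReal.tsum_le_tsum fun n => ?_
            rcases (t n).eq_empty_or_nonempty with h | h
            · have : O n = ∅ := by simp [hO, h]
              rw [this, Metric.diam_empty, H0]; simp
            · refine (hηc n).trans (add_le_add ?_ le_rfl)
              rw [iSup_pos h, hm _ (ediam_eq _).2.1]; exact le_rfl
        _ ≤ a / 4 + a / 4 := by
            rw [ENNReal.tsum_add]; exact add_le_add hsum.le hεs.le
        _ = a / 2 := by
            rw [← two_mul, show (4 : ℝ≥0∞) = 2 * 2 by norm_num]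
            rw [ENNReal.div_eq_inv_mul, ENNReal.div_eq_inv_mul, ENNReal.mul_inv (by simp) (by simp)]
            rw [← mul_assoc, ← mul_assoc, ENNReal.mul_inv_cancel (by simp) (by simp), one_mul]
    obtain ⟨n, hn⟩ := exists_subset_nhds_of_isCompact' (U := ⋃ i, O i) (V := fun n => (T x n).1)
      (directed_of_isDirected_le (fun i j hij => hTanti x hij))
      (fun n => (T x n).2.1) (fun n => (T x n).2.1.isClosed) (by
        intro y hy
        refine (isOpen_iUnion fun i => Metric.isOpen_thickening).mem_nhds ?_
        obtain ⟨i, hi⟩ := mem_iUnion.1 (hcov hy)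
        exact mem_iUnion.2 ⟨i, Metric.self_subset_thickening (hη i) _ hi⟩)
    obtain ⟨-, hlt, C, hC1, hC2, hC⟩ := (T x n).2
    refine lt_irrefl a (hlt.trans_le ?_)
    calc 2 ^ n * ν (T x n).1 ≤ 2 ^ n * ∑' i, ν ((T x n).1 ∩ O i) := by
          gcongr
          refine (measure_mono ?_).trans (measure_iUnion_le _)
          rw [← inter_iUnion]; exact subset_inter le_rfl hn
      _ = ∑' i, 2 ^ n * ν ((T x n).1 ∩ O i) := ENNReal.tsum_mul_left.symm
      _ ≤ ∑' i, 2 * ENNReal.ofReal (H (Metric.diam (O i))) := by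
          refine ENNReal.tsum_le_tsum fun i => (hC _ Metric.isOpen_thickening).trans ?_
          rw [ENNReal.ofReal_mul (by linarith)]
          gcongr
          exact (ENNReal.ofReal_le_ofReal hC2.le).trans (by simp)
      _ = 2 * ∑' i, ENNReal.ofReal (H (Metric.diam (O i))) := ENNReal.tsum_mul_left
      _ ≤ 2 * (a / 2) := by gcongr
      _ = a := ENNReal.mul_div_cancel (by simp) (by simp)

def SFs {K : Type v} [MetricSpace K] [MeasurableSpace K] [BorelSpace K] (m : ℝ≥0∞ → ℝ≥0∞)
    (S : Set K) : Prop :=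
  ∃ A : ℕ → Set K, (∀ n, (Measure.mkMetric m : Measure K) (A n) < ⊤) ∧ S ⊆ ⋃ n, A n

lemma SFs.mono {K : Type v} [MetricSpace K] [MeasurableSpace K] [BorelSpace K] {m : ℝ≥0∞ → ℝ≥0∞}
    {S T : Set K} (h : SFs m T) (hST : S ⊆ T) : SFs m S := by
  obtain ⟨A, h1, h2⟩ := h
  exact ⟨A, h1, hST.trans h2⟩

lemma SFs.iUnion {K : Type v} [MetricSpace K] [MeasurableSpace K] [BorelSpace K]
    {m : ℝ≥0∞ → ℝ≥0∞} {S : ℕ → Set K} (h : ∀ n, SFs m (S n)) : SFs m (⋃ n, S n) := by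
  choose A h1 h2 using h
  refine ⟨fun k => A k.unpair.1 k.unpair.2, fun n => h1 _ _, iUnion_subset fun n x hx => ?_⟩
  obtain ⟨i, hi⟩ := mem_iUnion.1 (h2 n hx)
  exact mem_iUnion.2 ⟨Nat.pair n i, by simpa using hi⟩

lemma SFs.of_lt {K : Type v} [MetricSpace K] [MeasurableSpace K] [BorelSpace K]
    {m : ℝ≥0∞ → ℝ≥0∞} {S : Set K} (h : (Measure.mkMetric m : Measure K) S < ⊤) : SFs m S :=
  ⟨fun _ => S, fun _ => h, fun x hx => mem_iUnion.2 ⟨0, hx⟩⟩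

lemma SFs.union {K : Type v} [MetricSpace K] [MeasurableSpace K] [BorelSpace K]
    {m : ℝ≥0∞ → ℝ≥0∞} {S T : Set K} (h : SFs m S) (h' : SFs m T) : SFs m (S ∪ T) := by
  refine (SFs.iUnion (S := fun n : ℕ => if n = 0 then S else T) (fun n => ?_)).mono ?_
  · split_ifs <;> assumption
  · rintro x (hx | hx)
    · exact mem_iUnion.2 ⟨0, by simpa using hx⟩
    · exact mem_iUnion.2 ⟨1, by simpa using hx⟩

lemma SFs.zero_diam {K : Type v} [MetricSpace K] [CompactSpace K] [MeasurableSpace K] [BorelSpace K]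
    {m : ℝ≥0∞ → ℝ≥0∞} (m0 : m 0 = 0) {S : Set K} (h : Metric.diam S = 0) : SFs m S := by
  refine SFs.of_lt ?_
  have h0 : Metric.ediam S = 0 := by rw [(ediam_eq S).1, h]; simp
  have := Measure.mkMetric_le_liminf_tsum (β := ℕ) (ι := fun _ => Unit) S (l := atTop)
    (fun _ => 0) tendsto_const_nhds (fun _ _ => S) (by simp [h0])
    (Eventually.of_forall fun _ x hx => mem_iUnion.2 ⟨(), hx⟩) m
  refine this.trans_lt ?_
  simp [h0, m0]

def PPs {K : Type v} [MetricSpace K] [MeasurableSpace K] [BorelSpace K] (m : ℝ≥0∞ → ℝ≥0∞)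
    (g : ℝ → ℝ) (c : ℝ) : Prop :=
  ∀ U : ℕ → Set K, SFs m (univ \ ⋃ i, U i) →
    ENNReal.ofReal c ≤ ∑' i, ENNReal.ofReal (g (Metric.diam (U i)))

lemma PPs.countable {K : Type v} [MetricSpace K] [MeasurableSpace K] [BorelSpace K]
    {m : ℝ≥0∞ → ℝ≥0∞} {g : ℝ → ℝ} {c : ℝ} (h : PPs (K := K) m g c) (g0 : g 0 = 0)
    {T : Type*} [Countable T] (U : T → Set K) (hU : SFs m (univ \ ⋃ i, U i)) :
    ENNReal.ofReal c ≤ ∑' i, ENNReal.ofReal (g (Metric.diam (U i))) := by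
  have := Encodable.ofCountable T
  have h1 := h (fun j => ⋃ b ∈ Encodable.decode₂ T j, U b) (by rwa [Encodable.iUnion_decode₂])
  rwa [tsum_iUnion_decode₂ (fun s : Set K => ENNReal.ofReal (g (Metric.diam s))) (by simp [g0])] at h1

lemma PPs_init {K : Type v} [MetricSpace K] [CompactSpace K] [MeasurableSpace K] [BorelSpace K]
    (H : ℝ → ℝ) (Hm : Monotone H) (Hp : ∀ t, 0 < t → 0 < H t)
    (m : ℝ≥0∞ → ℝ≥0∞) (hm : ∀ d, d ≠ ⊤ → m d = ENNReal.ofReal (H d.toReal))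
    (hK : ¬ SFs m (univ : Set K)) : ∃ c : ℝ, 0 < c ∧ PPs (K := K) m H c := by
  by_contra! hcon
  have hp : ∀ n : ℕ, (0 : ℝ) < 1 / (n + 1) := fun n => by positivity
  have := fun n : ℕ => hcon (min (1 / (n + 1 : ℝ)) (H (1 / (n + 1 : ℝ))))
    (lt_min (hp n) (Hp _ (hp n)))
  simp only [PPs] at this
  push Not at this
  choose U hU hs using this
  apply hK
  have hS := SFs.iUnion hU
  have hd : ∀ n i, Metric.diam (U n i) ≤ 1 / (n + 1 : ℝ) := by
    intro n i
    by_contra! hlt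
    have h1 := (ENNReal.le_tsum (f := fun i => ENNReal.ofReal (H (Metric.diam (U n i)))) i).trans_lt (hs n)
    have h2 := (ENNReal.ofReal_le_ofReal (Hm hlt.le)).trans_lt h1
    have h3 := h2.trans_le (ENNReal.ofReal_le_ofReal (min_le_right _ _))
    exact lt_irrefl _ h3
  have hL : (Measure.mkMetric m : Measure K) (univ \ ⋃ n, (univ \ ⋃ i, U n i)) = 0 := by
    have h1 := Measure.mkMetric_le_liminf_tsum (β := ℕ) (ι := fun _ => ℕ)
      (univ \ ⋃ n, (univ \ ⋃ i, U n i)) (l := atTop)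
      (fun n => ENNReal.ofReal (1 / (n + 1 : ℝ)))
      (by
        rw [← ENNReal.ofReal_zero]
        exact (ENNReal.continuous_ofReal.tendsto _).comp tendsto_one_div_add_atTop_nhds_zero_nat)
      U (Eventually.of_forall fun n i => by
        rw [(ediam_eq (U n i)).1]; exact ENNReal.ofReal_le_ofReal (hd n i))
      (Eventually.of_forall fun n x hx => by
        by_contra hc
        exact hx.2 (mem_iUnion.2 ⟨n, mem_univ _, hc⟩)) m
    refine le_antisymm (h1.trans ?_) zero_le
    have h2 : Tendsto (fun n => ∑' i, m (Metric.ediam (U n i))) atTop (𝓝 0) := by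
      refine tendsto_of_tendsto_of_tendsto_of_le_of_le tendsto_const_nhds
        (h := fun n : ℕ => ENNReal.ofReal (1 / (n + 1 : ℝ))) ?_ (fun _ => zero_le) (fun n => ?_)
      · rw [← ENNReal.ofReal_zero]
        exact (ENNReal.continuous_ofReal.tendsto _).comp tendsto_one_div_add_atTop_nhds_zero_nat
      · refine le_trans (le_of_eq ?_) ((hs n).le.trans (ENNReal.ofReal_le_ofReal (min_le_left _ _)))
        refine tsum_congr fun i => ?_
        rw [hm _ (ediam_eq _).2.1, (ediam_eq _).2.2]
    rw [h2.liminf_eq]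
  refine ((SFs.of_lt (by rw [hL]; simp)).union hS).mono ?_
  intro x _
  by_cases h : x ∈ ⋃ n, (univ \ ⋃ i, U n i)
  · exact Or.inr h
  · exact Or.inl ⟨mem_univ _, h⟩

lemma blaschke {K : Type v} [MetricSpace K] [CompactSpace K] {T : Type*} (W : ℕ → T → Set K) :
    ∃ F : T → Set K, ∀ t,
      Tendsto (fun n => Metric.diam (W n t)) (hyperfilter ℕ : Filter ℕ) (𝓝 (Metric.diam (F t))) ∧
      ∀ η > 0, ∀ᶠ n in (hyperfilter ℕ : Filter ℕ), W n t ⊆ Metric.thickening η (F t) := by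
  have key : ∀ t, ∃ F : TopologicalSpace.Closeds K, Tendsto
      (fun n => TopologicalSpace.Closeds.closure (W n t)) (hyperfilter ℕ : Filter ℕ) (𝓝 F) := by
    intro t
    have := ((hyperfilter ℕ).map (fun n => TopologicalSpace.Closeds.closure (W n t))).le_nhds_lim
    exact ⟨_, this⟩
  choose F hF using key
  refine ⟨fun t => F t, fun t => ?_⟩
  have hev : ∀ η > (0:ℝ), ∀ᶠ n in (hyperfilter ℕ : Filter ℕ), W n t ⊆ Metric.thickening η (F t) ∧
      (F t : Set K) ⊆ Metric.thickening η (W n t) := by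
    intro η hη
    have h1 := EMetric.tendsto_nhds.1 (hF t) (ENNReal.ofReal η) (by simpa using hη)
    filter_upwards [h1] with n hn
    rw [TopologicalSpace.Closeds.edist_eq, TopologicalSpace.Closeds.coe_closure,
      Metric.hausdorffEDist_closure_left] at hn
    constructor
    · intro x hx
      obtain ⟨y, hy, hxy⟩ := Metric.exists_edist_lt_of_hausdorffEDist_lt hx hn
      rw [Metric.mem_thickening_iff]
      exact ⟨y, hy, by rwa [edist_dist, ENNReal.ofReal_lt_ofReal_iff hη] at hxy⟩
    · intro x hx
      rw [Metric.hausdorffEDist_comm] at hn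
      obtain ⟨y, hy, hxy⟩ := Metric.exists_edist_lt_of_hausdorffEDist_lt hx hn
      rw [Metric.mem_thickening_iff]
      exact ⟨y, hy, by rwa [edist_dist, ENNReal.ofReal_lt_ofReal_iff hη] at hxy⟩
  refine ⟨?_, fun η hη => (hev η hη).mono fun n h => h.1⟩
  rw [Metric.tendsto_nhds]
  intro ε hε
  filter_upwards [hev (ε/3) (by positivity)] with n hn
  have h1 := (Metric.diam_mono hn.1 Metric.isBounded_of_compactSpace).trans
    (Metric.diam_thickening_le _ (by positivity))
  have h2 := (Metric.diam_mono hn.2 Metric.isBounded_of_compactSpace).trans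
    (Metric.diam_thickening_le _ (by positivity))
  rw [Real.dist_eq, abs_lt]; constructor <;> linarith

lemma reindex {K : Type v} [MetricSpace K] [CompactSpace K] 
    (H : ℝ → ℝ) (Hm : Monotone H) (Hp : ∀ t, 0 < t → 0 < H t) (D : ℝ) (hD0 : 0 < D)
    (hD : ∀ s : Set K, Metric.diam s ≤ D) (C : ℝ) :
    ∃ N : ℕ → ℕ, ∀ U : ℕ → Set K, ∑' i, ENNReal.ofReal (H (Metric.diam (U i))) ≤ ENNReal.ofReal C →
      ∃ W : (Σ j, Fin (N j)) → Set K, (∀ t, Metric.diam (W t) ≤ D / 2 ^ t.1) ∧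
        (∀ G : ℝ → ℝ≥0∞, G 0 = 0 → ∑' t, G (Metric.diam (W t)) ≤ ∑' i, G (Metric.diam (U i))) ∧
        ∀ i, 0 < Metric.diam (U i) → ∃ t, W t = U i := by
  classical
  set b : ℕ → ℝ≥0∞ := fun j => ENNReal.ofReal (H (D / 2 ^ (j + 1))) with hb
  have hb0 : ∀ j, b j ≠ 0 := fun j => by
    simp only [hb, ne_eq, ENNReal.ofReal_eq_zero, not_le]; exact Hp _ (by positivity)
  refine ⟨fun j => ⌊(ENNReal.ofReal C / b j).toReal⌋₊, fun U hU => ?_⟩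
  have hex : ∀ i : {i // 0 < Metric.diam (U i)}, ∃ j : ℕ, D / 2 ^ (j+1) < Metric.diam (U i.1) := by
    intro i
    obtain ⟨j, hj⟩ := pow_unbounded_of_one_lt (D / Metric.diam (U i.1)) (one_lt_two (α := ℝ))
    refine ⟨j, ?_⟩
    rw [div_lt_iff₀ i.2] at hj
    rw [div_lt_iff₀ (by positivity), pow_succ]
    nlinarith [i.2, pow_pos (two_pos (α := ℝ)) j]
  set cl : {i // 0 < Metric.diam (U i)} → ℕ := fun i => Nat.find (hex i) with hcl
  have hcl1 : ∀ i, D / 2 ^ (cl i + 1) < Metric.diam (U i.1) := fun i => Nat.find_spec (hex i)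
  have hcl2 : ∀ i, Metric.diam (U i.1) ≤ D / 2 ^ (cl i) := by
    intro i
    rcases h : cl i with _ | k
    · simpa using hD _
    · have := Nat.find_min (hex i) (m := k) (by simp only [hcl] at h; omega)
      simpa using this
  have hcard : ∀ j, ∃ e : {i // cl i = j} → Fin ⌊(ENNReal.ofReal C / b j).toReal⌋₊,
      Function.Injective e := by
    intro j
    obtain ⟨hf, hc⟩ := ENNReal.finset_card_const_le_le_of_tsum_le (ENNReal.ofReal_ne_top) hU (hb0 j)
    have hc' : hf.toFinset.card ≤ ⌊(ENNReal.ofReal C / b j).toReal⌋₊ := by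
      apply Nat.le_floor
      have := ENNReal.toReal_mono (ENNReal.div_ne_top ENNReal.ofReal_ne_top (hb0 j)) hc
      simpa using this
    let e1 : {i // cl i = j} → hf.toFinset := fun i => ⟨i.1.1, by
      simp only [Finite.mem_toFinset, mem_ofPred_eq, hb]
      refine ENNReal.ofReal_le_ofReal (Hm ?_)
      have := hcl1 i.1
      rw [i.2] at this; exact this.le⟩
    refine ⟨fun i => Fin.castLE hc' (hf.toFinset.equivFin (e1 i)), ?_⟩
    intro i i' h
    have h1 := hf.toFinset.equivFin.injective (Fin.castLE_injective hc' h)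
    have h2 : i.1.1 = i'.1.1 := congrArg (fun z : hf.toFinset => z.1) h1
    exact Subtype.ext (Subtype.ext h2)
  choose e he using hcard
  let ι : {i // 0 < Metric.diam (U i)} → (Σ j, Fin ⌊(ENNReal.ofReal C / b j).toReal⌋₊) :=
    fun i => ⟨cl i, e (cl i) ⟨i, rfl⟩⟩
  have hι : Function.Injective ι := by
    intro i i' h
    have h1 : cl i = cl i' := congrArg Sigma.fst h
    have gen : ∀ j j' (hj : cl i = j) (hj' : cl i' = j'),
        (⟨j, e j ⟨i, hj⟩⟩ : Σ j, Fin ⌊(ENNReal.ofReal C / b j).toReal⌋₊) = ⟨j', e j' ⟨i', hj'⟩⟩ → i = i' := by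
      intro j j' hj hj' hh
      have : j = j' := congrArg Sigma.fst hh
      subst this
      have h2 := eq_of_heq (Sigma.mk.inj hh).2
      exact congrArg Subtype.val (he j h2)
    exact gen _ _ rfl rfl h
  set W := Function.extend ι (fun i => U i.1) (fun _ => (∅ : Set K)) with hW
  have hWι : ∀ i, W (ι i) = U i.1 := fun i => hι.extend_apply _ _ i
  have hWn : ∀ t, (¬ ∃ i, ι i = t) → W t = ∅ := fun t ht => Function.extend_apply' _ _ _ ht
  refine ⟨W, fun t => ?_, fun G G0 => ?_, fun i hi => ⟨ι ⟨i, hi⟩, hWι _⟩⟩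
  · by_cases ht : ∃ i, ι i = t
    · obtain ⟨i, rfl⟩ := ht
      rw [hWι]; exact hcl2 i
    · rw [hWn t ht, Metric.diam_empty]; positivity
  · rw [← hι.tsum_eq (f := fun t => G (Metric.diam (W t)))]
    · simp only [hWι]
      exact ENNReal.tsum_comp_le_tsum_of_injective Subtype.val_injective
        (fun i => G (Metric.diam (U i)))
    · intro t ht
      by_contra hc
      apply ht
      simp only [hWn t hc, Metric.diam_empty, G0]

lemma PPs_step {K : Type v} [MetricSpace K] [CompactSpace K] [MeasurableSpace K] [BorelSpace K]
    (H : ℝ → ℝ) (Hm : Monotone H) (Hp : ∀ t, 0 < t → 0 < H t) (H0 : H 0 = 0)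
    (m : ℝ≥0∞ → ℝ≥0∞) (hm : ∀ d, d ≠ ⊤ → m d = ENNReal.ofReal (H d.toReal))
    (g : ℝ → ℝ) (gc : Continuous g) (g0 : g 0 = 0) (θ : ℝ) (hθ : 0 < θ)
    (hg : ∀ t, 0 ≤ t → θ * H t ≤ g t) (c c' : ℝ) (hc' : 0 < c') (hcc : c' < c)
    (hP : PPs (K := K) m g c) (ρ : ℝ) (hρ : 0 < ρ) :
    ∃ δ, 0 < δ ∧ δ ≤ ρ ∧
      PPs (K := K) m (fun t => g t * min 1 (max (1 / 2) (t / (2 * δ)))) c' := by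
  classical
  by_contra! hcon
  set δ : ℕ → ℝ := fun n => ρ / (n + 1) with hδ
  have hδ0 : ∀ n, 0 < δ n := fun n => by positivity
  have hδ1 : ∀ n, δ n ≤ ρ := fun n => div_le_self hρ.le (by linarith [Nat.cast_nonneg (α := ℝ) n])
  have hδt : Tendsto δ atTop (𝓝 0) := by
    have := (tendsto_one_div_add_atTop_nhds_zero_nat (𝕜 := ℝ)).const_mul ρ
    simpa [hδ, div_eq_mul_inv] using this
  set ψ : ℕ → ℝ → ℝ := fun n t => min 1 (max (1 / 2) (t / (2 * δ n))) with hψ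
  have h1 := fun n => hcon (δ n) (hδ0 n) (hδ1 n)
  simp only [PPs] at h1
  push Not at h1
  choose U hU hs using h1
  have Hnn : ∀ t, 0 ≤ t → 0 ≤ H t := fun t ht => H0 ▸ Hm ht
  have gnn : ∀ t, 0 ≤ t → 0 ≤ g t := fun t ht => (mul_nonneg hθ.le (Hnn t ht)).trans (hg t ht)
  have ψh : ∀ n t, 1 / 2 ≤ ψ n t := fun n t => le_min (by norm_num) (le_max_left _ _)
  have hH : ∀ n, ∑' i, ENNReal.ofReal (H (Metric.diam (U n i))) ≤ ENNReal.ofReal (2 / θ * c') := by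
    intro n
    calc ∑' i, ENNReal.ofReal (H (Metric.diam (U n i)))
        ≤ ∑' i, ENNReal.ofReal (2 / θ) * ENNReal.ofReal (g (Metric.diam (U n i)) * ψ n (Metric.diam (U n i))) := by
          refine ENNReal.tsum_le_tsum fun i => ?_
          rw [← ENNReal.ofReal_mul (by positivity)]
          refine ENNReal.ofReal_le_ofReal ?_
          have hd := Metric.diam_nonneg (s := U n i)
          have a1 := hg _ hd
          have a2 := ψh n (Metric.diam (U n i))
          have a3 := gnn _ hd
          rw [div_mul_eq_mul_div, le_div_iff₀ hθ]
          nlinarith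
      _ = ENNReal.ofReal (2 / θ) * ∑' i, ENNReal.ofReal (g (Metric.diam (U n i)) * ψ n (Metric.diam (U n i))) :=
          ENNReal.tsum_mul_left
      _ ≤ ENNReal.ofReal (2 / θ) * ENNReal.ofReal c' := by gcongr; exact (hs n).le
      _ = _ := (ENNReal.ofReal_mul (by positivity)).symm
  set D : ℝ := Metric.diam (univ : Set K) + 1 with hD
  have hD0 : 0 < D := by have := Metric.diam_nonneg (s := (univ : Set K)); positivity
  have hDd : ∀ s : Set K, Metric.diam s ≤ D := fun s =>
    (Metric.diam_mono (subset_univ s) Metric.isBounded_of_compactSpace).trans (by simp [hD])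
  obtain ⟨N, hN⟩ := reindex (K := K) H Hm Hp D hD0 hDd (2 / θ * c')
  choose W hW1 hW2 hW3 using fun n => hN (U n) (hH n)
  obtain ⟨F, hF⟩ := blaschke W
  have hFs : ∑' t, ENNReal.ofReal (g (Metric.diam (F t))) ≤ ENNReal.ofReal c' := by
    rw [ENNReal.tsum_eq_iSup_sum]
    refine iSup_le fun s => ?_
    have e1 : ∑ t ∈ s, ENNReal.ofReal (g (Metric.diam (F t))) =
        ∑ t ∈ s with 0 < Metric.diam (F t), ENNReal.ofReal (g (Metric.diam (F t))) := by
      rw [Finset.sum_filter]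
      refine Finset.sum_congr rfl fun t _ => ?_
      split_ifs with h
      · rfl
      · rw [le_antisymm (not_lt.1 h) Metric.diam_nonneg, g0, ENNReal.ofReal_zero]
    rw [e1]
    have ht : Tendsto (fun n => ∑ t ∈ s with 0 < Metric.diam (F t), ENNReal.ofReal (g (Metric.diam (W n t))))
        (hyperfilter ℕ : Filter ℕ) (𝓝 (∑ t ∈ s with 0 < Metric.diam (F t), ENNReal.ofReal (g (Metric.diam (F t))))) := by
      refine tendsto_finsetSum _ fun t _ => ?_
      exact (ENNReal.continuous_ofReal.tendsto _).comp ((gc.tendsto _).comp (hF t).1)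
    refine le_of_tendsto ht ?_
    have hev : ∀ᶠ n in (hyperfilter ℕ : Filter ℕ), ∀ t ∈ s.filter (fun t => 0 < Metric.diam (F t)),
        ψ n (Metric.diam (W n t)) = 1 := by
      rw [Filter.eventually_all_finset]
      intro t ht
      have hp := (Finset.mem_filter.1 ht).2
      have a1 := (hF t).1.eventually (lt_mem_nhds (half_lt_self hp))
      have a2 : ∀ᶠ n in (hyperfilter ℕ : Filter ℕ), δ n < Metric.diam (F t) / 4 :=
        (hδt.eventually (gt_mem_nhds (by positivity))).filter_mono Nat.hyperfilter_le_atTop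
      filter_upwards [a1, a2] with n b1 b2
      simp only [hψ]
      refine min_eq_left (le_max_of_le_right ?_)
      rw [le_div_iff₀ (by have := hδ0 n; positivity)]
      linarith
    filter_upwards [hev] with n hn
    calc ∑ t ∈ s with 0 < Metric.diam (F t), ENNReal.ofReal (g (Metric.diam (W n t)))
        = ∑ t ∈ s with 0 < Metric.diam (F t), ENNReal.ofReal (g (Metric.diam (W n t)) * ψ n (Metric.diam (W n t))) := by
          refine Finset.sum_congr rfl fun t ht => ?_
          rw [hn t ht, mul_one]
      _ ≤ ∑' t, ENNReal.ofReal (g (Metric.diam (W n t)) * ψ n (Metric.diam (W n t))) :=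
          ENNReal.sum_le_tsum _
      _ ≤ ∑' i, ENNReal.ofReal (g (Metric.diam (U n i)) * ψ n (Metric.diam (U n i))) :=
          hW2 n (fun d => ENNReal.ofReal (g d * ψ n d)) (by simp [g0])
      _ ≤ _ := (hs n).le
  have hgap : ENNReal.ofReal c - ENNReal.ofReal c' ≠ 0 := by
    rw [ne_eq, tsub_eq_zero_iff_le, not_le]
    exact (ENNReal.ofReal_lt_ofReal_iff (hc'.trans hcc)).2 hcc
  obtain ⟨ε, hε, hεs⟩ := ENNReal.exists_pos_sum_of_countable' hgap (Σ j, Fin (N j))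
  choose η hη hηc using fun t => thick_cost g gc (F t) (ε t) (hε t).ne'
  set O := fun t => Metric.thickening (η t) (F t) with hO
  have hOs : ∑' t, ENNReal.ofReal (g (Metric.diam (O t))) < ENNReal.ofReal c := by
    calc ∑' t, ENNReal.ofReal (g (Metric.diam (O t)))
        ≤ ∑' t, (ENNReal.ofReal (g (Metric.diam (F t))) + ε t) := ENNReal.tsum_le_tsum hηc
      _ = ∑' t, ENNReal.ofReal (g (Metric.diam (F t))) + ∑' t, ε t := ENNReal.tsum_add
      _ ≤ ENNReal.ofReal c' + ∑' t, ε t := by gcongr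
      _ < ENNReal.ofReal c' + (ENNReal.ofReal c - ENNReal.ofReal c') :=
          ENNReal.add_lt_add_left ENNReal.ofReal_ne_top hεs
      _ = ENNReal.ofReal c := add_tsub_cancel_of_le (ENNReal.ofReal_le_ofReal hcc.le)
  refine absurd (hP.countable g0 O ?_) (not_le.2 hOs)
  have m0 : m 0 = 0 := by rw [hm 0 (by simp)]; simp [H0]
  have hS : SFs m (⋃ n, ((univ \ ⋃ i, U n i) ∪ ⋃ i, (if Metric.diam (U n i) = 0 then U n i else ∅))) := by
    refine SFs.iUnion fun n => (hU n).union (SFs.iUnion fun i => ?_)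
    split_ifs with h
    · exact SFs.zero_diam m0 h
    · exact SFs.zero_diam m0 Metric.diam_empty
  set S := ⋃ n, ((univ \ ⋃ i, U n i) ∪ ⋃ i, (if Metric.diam (U n i) = 0 then U n i else ∅)) with hSdef
  have hch : ∀ j : ℕ, ∃ n, ∀ t : (Σ j, Fin (N j)), t.1 ≤ j → W n t ⊆ O t := by
    intro j
    have : ∀ᶠ n in (hyperfilter ℕ : Filter ℕ),
        ∀ t ∈ (Finset.range (j+1)).sigma (fun j => (Finset.univ : Finset (Fin (N j)))), W n t ⊆ O t := by
      rw [Filter.eventually_all_finset]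
      exact fun t _ => (hF t).2 _ (hη t)
    obtain ⟨n, hn⟩ := this.exists
    exact ⟨n, fun t ht => hn t (by simp; omega)⟩
  choose M hM using hch
  have hL : (Measure.mkMetric m : Measure K) (univ \ ((⋃ t, O t) ∪ S)) ≤ ENNReal.ofReal (2 / θ * c') := by
    refine (Measure.mkMetric_le_liminf_tsum (β := ℕ) (ι := fun j => {t : (Σ j, Fin (N j)) // j < t.1}) _
      (l := atTop) (fun j => ENNReal.ofReal (D / 2 ^ j)) ?_ (fun j t => W (M j) t.1) ?_ ?_ m).trans ?_
    · rw [← ENNReal.ofReal_zero]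
      refine (ENNReal.continuous_ofReal.tendsto _).comp ?_
      have := (tendsto_pow_atTop_nhds_zero_of_lt_one (r := (1/2 : ℝ)) (by norm_num) (by norm_num)).const_mul D
      simpa [div_eq_mul_inv] using this
    · refine Eventually.of_forall fun j t => ?_
      rw [(ediam_eq _).1]
      refine ENNReal.ofReal_le_ofReal ((hW1 _ _).trans ?_)
      have := t.2
      gcongr
      norm_num
    · refine Eventually.of_forall fun j x hx => ?_
      have hxO : x ∉ ⋃ t, O t := fun h => hx.2 (Or.inl h)
      have hxS : x ∉ S := fun h => hx.2 (Or.inr h)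
      have hxU : x ∈ ⋃ i, U (M j) i := by
        by_contra h
        exact hxS (mem_iUnion.2 ⟨M j, Or.inl ⟨mem_univ _, h⟩⟩)
      obtain ⟨i, hi⟩ := mem_iUnion.1 hxU
      have hpos : 0 < Metric.diam (U (M j) i) := by
        refine lt_of_le_of_ne Metric.diam_nonneg fun h => ?_
        exact hxS (mem_iUnion.2 ⟨M j, Or.inr (mem_iUnion.2 ⟨i, by rw [if_pos h.symm]; exact hi⟩)⟩)
      obtain ⟨t, ht⟩ := hW3 _ i hpos
      refine mem_iUnion.2 ⟨⟨t, ?_⟩, by rw [ht]; exact hi⟩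
      by_contra hle
      exact hxO (mem_iUnion.2 ⟨t, hM j t (not_lt.1 hle) (by rw [ht]; exact hi)⟩)
    · refine liminf_le_of_frequently_le' (Frequently.of_forall fun j => ?_)
      calc ∑' t : {t : (Σ j, Fin (N j)) // j < t.1}, m (Metric.ediam (W (M j) t.1))
          = ∑' t : {t : (Σ j, Fin (N j)) // j < t.1}, ENNReal.ofReal (H (Metric.diam (W (M j) t.1))) := by
            refine tsum_congr fun t => ?_
            rw [hm _ (ediam_eq _).2.1, (ediam_eq _).2.2]
        _ ≤ ∑' t, ENNReal.ofReal (H (Metric.diam (W (M j) t))) :=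
            ENNReal.tsum_comp_le_tsum_of_injective Subtype.val_injective
              (fun t => ENNReal.ofReal (H (Metric.diam (W (M j) t))))
        _ ≤ ∑' i, ENNReal.ofReal (H (Metric.diam (U (M j) i))) :=
            hW2 (M j) (fun d => ENNReal.ofReal (H d)) (by simp [H0])
        _ ≤ _ := hH _
  refine ((SFs.of_lt (hL.trans_lt ENNReal.ofReal_lt_top)).union hS).mono ?_
  intro x hx
  by_cases h : x ∈ S
  · exact Or.inr h
  · exact Or.inl ⟨mem_univ _, fun h' => h'.elim hx.2 h⟩

lemma gauge_rec {K : Type v} [MetricSpace K] [CompactSpace K] [MeasurableSpace K] [BorelSpace K]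
    (H : ℝ → ℝ) (Hc : Continuous H) (Hm : Monotone H) (Hp : ∀ t, 0 < t → 0 < H t) (H0 : H 0 = 0)
    (m : ℝ≥0∞ → ℝ≥0∞) (hm : ∀ d, d ≠ ⊤ → m d = ENNReal.ofReal (H d.toReal))
    (hK : ¬ SFs m (univ : Set K)) :
    ∃ (c : ℝ) (φ : ℕ → ℝ → ℝ) (ρ : ℕ → ℝ), 0 < c ∧ (∀ n, Monotone (φ n)) ∧
      (∀ n t, 0 ≤ φ n t ∧ φ n t ≤ 1) ∧ (∀ n t, 0 ≤ t → φ n (3 * t) ≤ 2 * φ n t) ∧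
      (∀ n t, t ≤ ρ n → φ n t = (1 / 2) ^ n) ∧ (∀ n, 0 < ρ n) ∧ (∀ n, ρ (n+1) ≤ ρ n / 6) ∧
      (∀ n t, ρ n ≤ t → φ (n+1) t = φ n t) ∧ (∀ n, PPs (K := K) m (fun t => H t * φ n t) c) := by
  obtain ⟨c₀, hc₀, hP₀⟩ := PPs_init (K := K) H Hm Hp m hm hK
  have Hnn : ∀ t, 0 ≤ t → 0 ≤ H t := fun t ht => H0 ▸ Hm ht
  set Inv : ℕ → (ℝ → ℝ) × ℝ × ℝ → Prop := fun n s =>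
    Continuous s.1 ∧ Monotone s.1 ∧ (∀ t, (1 / 2) ^ n ≤ s.1 t ∧ s.1 t ≤ 1) ∧
    (∀ t, 0 ≤ t → s.1 (3 * t) ≤ 2 * s.1 t) ∧ (∀ t, t ≤ s.2.1 → s.1 t = (1 / 2) ^ n) ∧
    0 < s.2.1 ∧ c₀ / 2 < s.2.2 ∧ PPs (K := K) m (fun t => H t * s.1 t) s.2.2 with hInv
  have h00 : Inv 0 (fun _ => 1, 1, c₀) := by
    refine ⟨continuous_const, monotone_const, fun t => by simp, fun t _ => by norm_num,
      fun t _ => by simp, by norm_num, by simpa using half_lt_self hc₀, by simpa using hP₀⟩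
  have step : ∀ n s, Inv n s → ∃ s', Inv (n+1) s' ∧ s'.2.1 ≤ s.2.1 / 6 ∧
      ∀ t, s.2.1 ≤ t → s'.1 t = s.1 t := by
    rintro n ⟨φ, ρ, c⟩ ⟨i1, i2, i3, i4, i5, i6, i7, i8⟩
    dsimp only at i1 i2 i3 i4 i5 i6 i7 i8 ⊢
    obtain ⟨δ, hδ0, hδ1, hδ⟩ := PPs_step (K := K) H Hm Hp H0 m hm (fun t => H t * φ t) (Hc.mul i1)
      (by simp [H0]) ((1/2)^n) (by positivity) (fun t ht => by
        have := (i3 t).1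
        have := Hnn t ht
        nlinarith) c ((c₀ / 2 + c) / 2) (by linarith) (by linarith) i8 (ρ / 6) (by positivity)
    set ψ : ℝ → ℝ := fun t => min 1 (max (1 / 2) (t / (2 * δ))) with hψ
    have ψ1 : ∀ t, ψ t ≤ 1 := fun t => min_le_left _ _
    have ψ2 : ∀ t, 1 / 2 ≤ ψ t := fun t => le_min (by norm_num) (le_max_left _ _)
    have ψ3 : ∀ t, 2 * δ ≤ t → ψ t = 1 := fun t ht => min_eq_left (le_max_of_le_right (by
      rw [le_div_iff₀ (by positivity)]; linarith))
    have ψ4 : ∀ t, t ≤ δ → ψ t = 1 / 2 := fun t ht => by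
      have : t / (2 * δ) ≤ 1 / 2 := by rw [div_le_iff₀ (by positivity)]; linarith
      simp only [hψ]
      rw [max_eq_left this, min_eq_right (by norm_num)]
    have ψm : Monotone ψ := fun a b hab => by
      simp only [hψ]; gcongr
    have ψc : Continuous ψ := by
      simp only [hψ]; fun_prop
    have hp : (0:ℝ) < (1/2)^n := by positivity
    refine ⟨(fun t => φ t * ψ t, δ, (c₀ / 2 + c) / 2), ⟨i1.mul ψc, ?_, ?_, ?_, ?_, hδ0, by dsimp only; linarith, ?_⟩, hδ1, ?_⟩
    · intro a b hab
      exact mul_le_mul (i2 hab) (ψm hab) (by linarith [ψ2 a]) (by linarith [(i3 b).1])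
    · intro t
      have := i3 t; have := ψ1 t; have := ψ2 t
      dsimp only
      constructor
      · rw [pow_succ]; exact mul_le_mul (i3 t).1 (ψ2 t) (by norm_num) (by linarith)
      · exact mul_le_one₀ (i3 t).2 (by linarith) (ψ1 t)
    · intro t ht
      dsimp only
      rcases le_or_gt (3 * t) ρ with h | h
      · rw [i5 _ h, i5 t (by linarith)]
        nlinarith [ψ1 (3 * t), ψ2 t]
      · rw [ψ3 t (by linarith), mul_one]
        nlinarith [ψ1 (3 * t), ψ2 (3 * t), i4 t ht, (i3 (3 * t)).1]
    · intro t ht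
      dsimp only at ht ⊢
      rw [i5 t (by linarith), ψ4 t ht, pow_succ]
    · simpa only [mul_assoc] using hδ
    · intro t ht
      dsimp only at ht ⊢
      rw [ψ3 t (by linarith), mul_one]
  choose! nx hnx1 hnx2 hnx3 using step
  let s : (n : ℕ) → (ℝ → ℝ) × ℝ × ℝ := fun n => Nat.rec (fun _ => 1, 1, c₀) (fun n s => nx n s) n
  have hs : ∀ n, Inv n (s n) := by
    intro n
    induction n with
    | zero => exact h00
    | succ n ih => exact hnx1 n _ ih
  refine ⟨c₀ / 2, fun n => (s n).1, fun n => (s n).2.1, by positivity, fun n => (hs n).2.1,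
    fun n t => ⟨le_trans (by positivity) ((hs n).2.2.1 t).1, ((hs n).2.2.1 t).2⟩,
    fun n => (hs n).2.2.2.1, fun n => (hs n).2.2.2.2.1, fun n => (hs n).2.2.2.2.2.1,
    fun n => hnx2 n _ (hs n), fun n => hnx3 n _ (hs n), fun n U hU => ?_⟩
  exact (ENNReal.ofReal_le_ofReal (hs n).2.2.2.2.2.2.1.le).trans ((hs n).2.2.2.2.2.2.2 U hU)

lemma gauge_fn {K : Type v} [MetricSpace K] [CompactSpace K] [MeasurableSpace K] [BorelSpace K]
    (H : ℝ → ℝ) (Hc : Continuous H) (Hm : Monotone H) (Hp : ∀ t, 0 < t → 0 < H t) (H0 : H 0 = 0)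
    (m : ℝ≥0∞ → ℝ≥0∞) (hm : ∀ d, d ≠ ⊤ → m d = ENNReal.ofReal (H d.toReal))
    (hK : ¬ SFs m (univ : Set K)) :
    ∃ (c : ℝ) (φ : ℝ → ℝ), 0 < c ∧ Monotone φ ∧ (∀ t, 0 ≤ φ t ∧ φ t ≤ 1) ∧
      (∀ t, 0 ≤ t → φ (3 * t) ≤ 2 * φ t) ∧ (∀ ε > 0, ∃ δ > 0, ∀ t < δ, φ t ≤ ε) ∧
      ∀ (ι : Type v) [Fintype ι] (U : ι → Set K), (⋃ i, U i) = univ →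
        c ≤ ∑ i, H (Metric.diam (U i)) * φ (Metric.diam (U i)) := by
  obtain ⟨c, φ, ρ, hc, h1, h2, h3, h4, h5, h6, h7, h8⟩ := gauge_rec (K := K) H Hc Hm Hp H0 m hm hK
  have Hnn : ∀ t, 0 ≤ t → 0 ≤ H t := fun t ht => H0 ▸ Hm ht
  have bdd : ∀ t, BddBelow (range fun n => φ n t) := fun t => ⟨0, by rintro _ ⟨n, rfl⟩; exact (h2 n t).1⟩
  have hle : ∀ n t, (⨅ n, φ n t) ≤ φ n t := fun n t => ciInf_le (bdd t) n
  refine ⟨c, fun t => ⨅ n, φ n t, hc, ?_, ?_, ?_, ?_, ?_⟩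
  · intro a b hab
    exact ciInf_mono (bdd a) fun n => h1 n hab
  · intro t
    exact ⟨le_ciInf fun n => (h2 n t).1, (hle 0 t).trans (h2 0 t).2⟩
  · intro t ht
    have : (⨅ n, φ n (3 * t)) / 2 ≤ ⨅ n, φ n t := le_ciInf fun n => by
      have := hle n (3 * t); have := h3 n t ht
      linarith
    dsimp only
    linarith
  · intro ε hε
    obtain ⟨n, hn⟩ := exists_pow_lt_of_lt_one hε (show (1/2 : ℝ) < 1 by norm_num)
    refine ⟨ρ n, h5 n, fun t ht => ?_⟩
    exact (hle n t).trans ((h4 n t ht.le).trans_le hn.le)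
  · intro ι _ U hU
    have hρm : Antitone ρ := antitone_nat_of_succ_le fun n => by linarith [h6 n, h5 n]
    have hρ0 : Tendsto ρ atTop (𝓝 0) := by
      have hb : ∀ n, ρ n ≤ ρ 0 * (1/2)^n := by
        intro n
        induction n with
        | zero => simp
        | succ n ih => rw [pow_succ]; linarith [h6 n, h5 n]
      have ht := (tendsto_pow_atTop_nhds_zero_of_lt_one (r := (1/2 : ℝ)) (by norm_num) (by norm_num)).const_mul (ρ 0)
      rw [mul_zero] at ht
      exact tendsto_of_tendsto_of_tendsto_of_le_of_le tendsto_const_nhds ht (fun n => (h5 n).le) hb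
    have hstab : ∀ n t, ρ n ≤ t → (⨅ k, φ k t) = φ n t := by
      intro n t ht
      have e1 : ∀ k, φ (n + k) t = φ n t := by
        intro k
        induction k with
        | zero => rfl
        | succ k ih => rw [← add_assoc, h7 _ _ ((hρm (by omega)).trans ht), ih]
      have e2 : ∀ k t, φ (k + 1) t ≤ φ k t := by
        intro k t
        rcases le_total (ρ k) t with h | h
        · exact (h7 k t h).le
        · rw [h4 k t h]
          calc φ (k+1) t ≤ φ (k+1) (ρ k) := h1 _ h
            _ = φ k (ρ k) := h7 k _ le_rfl
            _ = _ := h4 k _ le_rfl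
      refine le_antisymm (hle n t) (le_ciInf fun k => ?_)
      rcases le_total n k with h | h
      · obtain ⟨j, rfl⟩ := Nat.exists_eq_add_of_le h
        rw [e1]
      · exact (antitone_nat_of_succ_le (f := fun k => φ k t) (fun k => e2 k t)) h
    have hev : ∀ᶠ n in atTop, ∀ i, H (Metric.diam (U i)) * (⨅ k, φ k (Metric.diam (U i))) =
        H (Metric.diam (U i)) * φ n (Metric.diam (U i)) := by
      rw [eventually_all]
      intro i
      rcases (Metric.diam_nonneg (s := U i)).eq_or_lt with h | h
      · refine Eventually.of_forall fun n => ?_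
        rw [← h, H0]; simp
      · filter_upwards [hρ0.eventually (gt_mem_nhds h)] with n hn
        rw [hstab n _ hn.le]
    obtain ⟨n, hn⟩ := hev.exists
    simp only [hn]
    have := (h8 n).countable (by simp [H0]) U (by
      rw [hU, sdiff_self]
      exact SFs.of_lt (by simp))
    rw [tsum_fintype, ← ENNReal.ofReal_sum_of_nonneg] at this
    · refine (ENNReal.ofReal_le_ofReal_iff ?_).1 this
      exact Finset.sum_nonneg fun i _ => mul_nonneg (Hnn _ Metric.diam_nonneg) (h2 _ _).1
    · exact fun i _ => mul_nonneg (Hnn _ Metric.diam_nonneg) (h2 _ _).1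

lemma core {K : Type v} [MetricSpace K] [CompactSpace K] [MeasurableSpace K] [BorelSpace K]
    (H : ℝ → ℝ) (Hc : Continuous H) (Hm : Monotone H) (Hp : ∀ t, 0 < t → 0 < H t) (H0 : H 0 = 0)
    (m : ℝ≥0∞ → ℝ≥0∞) (hm : ∀ d, d ≠ ⊤ → m d = ENNReal.ofReal (H d.toReal))
    (hK : ¬ SFs m (univ : Set K)) (C : ℝ) (hC : 0 < C)
    (hD : ∀ U : Set K, ∃ (n : ℕ) (V : Fin n → Set K),
      {y | ∃ z ∈ U, dist y z ≤ Metric.diam U} ⊆ ⋃ i, V i ∧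
      (∀ i, Metric.diam (V i) ≤ 3 * Metric.diam U) ∧
      ∑ i, H (Metric.diam (V i)) ≤ C * H (Metric.diam U)) :
    ∃ T : (ℕ → Bool) → Set K, (∀ x, IsCompact (T x)) ∧ (∀ x y, x ≠ y → Disjoint (T x) (T y)) ∧
      ∀ x, 0 < (Measure.mkMetric m : Measure K) (T x) := by
  obtain ⟨c, φ, hc, φm, φb, φ3, φ0, hcov⟩ := gauge_fn (K := K) H Hc Hm Hp H0 m hm hK
  have Hnn : ∀ t, 0 ≤ t → 0 ≤ H t := fun t ht => H0 ▸ Hm ht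
  have Hd : ∀ U : Set K, 0 ≤ H (Metric.diam U) := fun U => Hnn _ Metric.diam_nonneg
  set g : Set K → ℝ := fun U => H (Metric.diam U) * φ (Metric.diam U) with hg
  have g0 : ∀ U, 0 ≤ g U := fun U => mul_nonneg (Hd U) (φb _).1
  have hDg : ∀ U : Set K, ∃ (n : ℕ) (V : Fin n → Set K),
      {y | ∃ z ∈ U, dist y z ≤ Metric.diam U} ⊆ ⋃ i, V i ∧ ∑ i, g (V i) ≤ (2 * C) * g U := by
    intro U
    obtain ⟨n, V, h1, h2, h3⟩ := hD U
    refine ⟨n, V, h1, ?_⟩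
    calc ∑ i, g (V i) ≤ ∑ i, H (Metric.diam (V i)) * (2 * φ (Metric.diam U)) := by
          refine Finset.sum_le_sum fun i _ => ?_
          exact mul_le_mul_of_nonneg_left ((φm (h2 i)).trans (φ3 _ Metric.diam_nonneg)) (Hd _)
      _ = (∑ i, H (Metric.diam (V i))) * (2 * φ (Metric.diam U)) := (Finset.sum_mul _ _ _).symm
      _ ≤ (C * H (Metric.diam U)) * (2 * φ (Metric.diam U)) := by
          refine mul_le_mul_of_nonneg_right h3 ?_
          have := (φb (Metric.diam U)).1
          positivity
      _ = _ := by simp only [hg]; ring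
  obtain ⟨ν, hν, hν1, hν2⟩ := frostman g g0 (c / (2 * C)) (fun s a ha hs => by
    have := weighted g g0 (2 * C) c hc.le hDg hcov s a 1 ha hs
    rw [div_le_iff₀ (by positivity)]; linarith)
  refine tree H Hc Hm Hp H0 m hm ν ?_ ?_ ?_
  · intro h
    rw [h] at hν1
    have : 0 < ENNReal.ofReal (c / (2 * C)) := ENNReal.ofReal_pos.2 (by positivity)
    exact absurd hν1 (not_le.2 this)
  · intro U hU
    refine (hν2 U hU).trans (ENNReal.ofReal_le_ofReal ?_)
    exact mul_le_of_le_one_right (Hd U) (φb _).2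
  · intro ε hε
    obtain ⟨δ, hδ, h⟩ := φ0 ε hε
    refine ⟨δ, hδ, fun U hU hd => (hν2 U hU).trans (ENNReal.ofReal_le_ofReal ?_)⟩
    rw [mul_comm ε]
    exact mul_le_mul_of_nonneg_left (h _ hd) (Hd U)

lemma D_of_local {K : Type v} [MetricSpace K] [CompactSpace K] 
    (H : ℝ → ℝ) (Hm : Monotone H) (Hp : ∀ t, 0 < t → 0 < H t) (H0 : H 0 = 0)
    (δ C₁ : ℝ) (hδ : 0 < δ)
    (hD : ∀ U : Set K, Metric.diam U ≤ δ → ∃ (n : ℕ) (V : Fin n → Set K),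
      {y | ∃ z ∈ U, dist y z ≤ Metric.diam U} ⊆ ⋃ i, V i ∧
      (∀ i, Metric.diam (V i) ≤ 3 * Metric.diam U) ∧
      ∑ i, H (Metric.diam (V i)) ≤ C₁ * H (Metric.diam U)) :
    ∃ C, 0 < C ∧ ∀ U : Set K, ∃ (n : ℕ) (V : Fin n → Set K),
      {y | ∃ z ∈ U, dist y z ≤ Metric.diam U} ⊆ ⋃ i, V i ∧
      (∀ i, Metric.diam (V i) ≤ 3 * Metric.diam U) ∧
      ∑ i, H (Metric.diam (V i)) ≤ C * H (Metric.diam U) := by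
  have Hnn : ∀ t, 0 ≤ t → 0 ≤ H t := fun t ht => H0 ▸ Hm ht
  obtain ⟨s, -, hs, hcov⟩ := Metric.totallyBounded_iff.1 (isCompact_univ (X := K)).totallyBounded (δ/2) (by positivity) |>.imp
    (fun s h => (⟨trivial, h.1, h.2⟩ : True ∧ _ ∧ _))
  have e := hs.toFinset.equivFin
  refine ⟨max C₁ 1 + hs.toFinset.card, by positivity, fun U => ?_⟩
  rcases le_total (Metric.diam U) δ with h | h
  · obtain ⟨n, V, h1, h2, h3⟩ := hD U h
    refine ⟨n, V, h1, h2, h3.trans ?_⟩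
    refine mul_le_mul_of_nonneg_right ?_ (Hnn _ Metric.diam_nonneg)
    have := le_max_left C₁ 1
    have : (0:ℝ) ≤ hs.toFinset.card := by positivity
    linarith
  · have hd : ∀ y : K, Metric.diam (Metric.ball y (δ/2)) ≤ δ := fun y =>
      (Metric.diam_ball (by positivity)).trans (by linarith)
    refine ⟨hs.toFinset.card, fun i => Metric.ball (e.symm i).1 (δ/2), ?_, ?_, ?_⟩
    · intro y _
      obtain ⟨z, hz, hyz⟩ := mem_iUnion₂.1 (hcov (mem_univ y))
      exact mem_iUnion.2 ⟨e ⟨z, hs.mem_toFinset.2 hz⟩, by simpa using hyz⟩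
    · intro i
      linarith [hd (e.symm i).1, hδ]
    · calc ∑ i, H (Metric.diam (Metric.ball (e.symm i).1 (δ/2))) ≤ ∑ i : Fin hs.toFinset.card, H (Metric.diam U) :=
            Finset.sum_le_sum fun i _ => Hm ((hd _).trans h)
        _ = hs.toFinset.card * H (Metric.diam U) := by simp
        _ ≤ _ := by
          refine mul_le_mul_of_nonneg_right ?_ (Hnn _ Metric.diam_nonneg)
          have := le_max_right C₁ 1
          linarith

lemma diam_enl {K : Type v} [MetricSpace K] [CompactSpace K] (U : Set K) :
    Metric.diam {y | ∃ z ∈ U, dist y z ≤ Metric.diam U} ≤ 3 * Metric.diam U := by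
  have hd := Metric.diam_nonneg (s := U)
  refine Metric.diam_le_of_forall_dist_le (by positivity) ?_
  rintro x ⟨z, hz, hxz⟩ y ⟨w, hw, hyw⟩
  have := Metric.dist_le_diam_of_mem (Metric.isBounded_of_compactSpace) hz hw
  have h1 := dist_triangle4 x z w y
  rw [dist_comm w y] at h1
  linarith

lemma D_prop {Z : Type v} [MetricSpace Z] (Y : Set Z) (hY : IsCompact Y) (h : ℝ≥0 → ℝ≥0∞)
    (hmono : Monotone h) (hpos : ∀ t, 0 < t → 0 < h t)
    (H : ℝ → ℝ) (hH : ∀ t : ℝ≥0, H t = (min (h t) 1).toReal)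
    (Hm : Monotone H) (Hp : ∀ t, 0 < t → 0 < H t) (H0 : H 0 = 0)
    (alt : FiniteOrder h ∨ FiniteStructuralDim Z ∨ ∀ x y z : Z, dist x z ≤ max (dist x y) (dist y z)) :
    ∃ C, 0 < C ∧ ∀ U : Set Y, ∃ (n : ℕ) (V : Fin n → Set Y),
      {y | ∃ z ∈ U, dist y z ≤ Metric.diam U} ⊆ ⋃ i, V i ∧
      (∀ i, Metric.diam (V i) ≤ 3 * Metric.diam U) ∧
      ∑ i, H (Metric.diam (V i)) ≤ C * H (Metric.diam U) := by
  have : CompactSpace Y := isCompact_iff_compactSpace.1 hY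
  have Hnn : ∀ t, 0 ≤ t → 0 ≤ H t := fun t ht => H0 ▸ Hm ht
  rcases alt with hfo | hfs | hult
  · unfold FiniteOrder at hfo
    obtain ⟨c, hc1, hc2⟩ := ENNReal.lt_iff_exists_nnreal_btwn.1 hfo
    have hev := eventually_lt_of_limsup_lt hc1
    rw [eventually_nhdsWithin_iff, Metric.eventually_nhds_iff] at hev
    obtain ⟨ε, hε, hev⟩ := hev
    refine D_of_local H Hm Hp H0 (ε/2) (max c 1) (by positivity) fun U hU => ?_
    refine ⟨1, fun _ => {y | ∃ z ∈ U, dist y z ≤ Metric.diam U}, ?_, fun _ => diam_enl U, ?_⟩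
    · intro y hy; exact mem_iUnion.2 ⟨0, hy⟩
    · simp only [Finset.univ_unique, Finset.sum_const, Finset.card_singleton, one_smul]
      refine (Hm (diam_enl U)).trans ?_
      rcases (Metric.diam_nonneg (s := U)).eq_or_lt with h0 | h0
      · rw [← h0]; simp [H0]
      · set t : ℝ≥0 := ⟨Metric.diam U, h0.le⟩ with ht
        have ht0 : 0 < t := h0
        have htr : Metric.diam U = t := rfl
        have h1 := (hev (y := t) (by
          rw [NNReal.dist_eq, NNReal.coe_zero, sub_zero, NNReal.abs_eq, ← htr]; linarith) ht0).le
        have h3 : (3 : ℝ) * Metric.diam U = ((3 * t : ℝ≥0) : ℝ) := by push_cast; rw [htr]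
        rw [h3, htr, hH, hH]
        have hcm : (max (c:ℝ) 1) = ((max c 1 : ℝ≥0) : ℝ≥0∞).toReal := by
          rw [ENNReal.coe_toReal, NNReal.coe_max, NNReal.coe_one]
        rw [hcm, ← ENNReal.toReal_mul]
        have hfin : ((max c 1 : ℝ≥0) : ℝ≥0∞) * min (h t) 1 ≠ ⊤ :=
          ENNReal.mul_ne_top ENNReal.coe_ne_top (ne_top_of_le_ne_top ENNReal.one_ne_top (min_le_right _ _))
        refine ENNReal.toReal_mono hfin ?_
        rcases le_total (h t) 1 with h4 | h4
        · rw [min_eq_left h4]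
          refine (min_le_left _ _).trans ?_
          rw [ENNReal.div_le_iff (hpos t ht0).ne' (ne_top_of_le_ne_top ENNReal.one_ne_top h4)] at h1
          refine h1.trans ?_
          gcongr
          exact le_max_left _ _
        · rw [min_eq_right h4, mul_one]
          refine (min_le_right _ _).trans ?_
          exact_mod_cast le_max_right c 1
  · obtain ⟨N, δ₀, hδ₀, hN⟩ := hfs (1/3) (by norm_num)
    refine D_of_local H Hm Hp H0 (δ₀/3) N (by positivity) fun U hU => ?_
    set E := {y | ∃ z ∈ U, dist y z ≤ Metric.diam U} with hE
    have hdE := diam_enl U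
    rw [← hE] at hdE
    have hed : Metric.ediam ((↑) '' E : Set Z) = ENNReal.ofReal (Metric.diam E) := by
      rw [isometry_subtype_coe.ediam_image, (ediam_eq E).1]
    obtain ⟨W, hW1, hW2⟩ := hN ((↑) '' E) (by
      change Metric.ediam ((↑) '' E : Set Z) ≤ _
      rw [hed, ENNReal.ofReal_le_iff_le_toReal (by simp)]
      simp only [ENNReal.coe_toReal]
      linarith)
    have hdV : ∀ i, Metric.diam ((↑) ⁻¹' W i : Set Y) ≤ Metric.diam U := by
      intro i
      have h1 : Metric.ediam ((↑) ⁻¹' W i : Set Y) ≤ Metric.ediam (W i) := by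
        rw [← isometry_subtype_coe.ediam_image]
        exact Metric.ediam_mono (image_preimage_subset _ _)
      have h2 : Metric.ediam (W i) ≤ ENNReal.ofReal (Metric.diam U) := by
        refine (hW2 i).trans ?_
        change _ * Metric.ediam ((↑) '' E : Set Z) ≤ _
        rw [hed, ENNReal.le_ofReal_iff_toReal_le (ENNReal.mul_ne_top (by simp) (by simp)) Metric.diam_nonneg]
        rw [ENNReal.toReal_mul, ENNReal.toReal_ofReal Metric.diam_nonneg]
        simp
        linarith
      have h3 := h1.trans h2
      rw [(ediam_eq _).1] at h3
      exact (ENNReal.ofReal_le_ofReal_iff Metric.diam_nonneg).1 h3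
    have hdV3 : ∀ i, Metric.diam ((↑) ⁻¹' W i : Set Y) ≤ 3 * Metric.diam U := fun i => by
      have := hdV i
      have := Metric.diam_nonneg (s := U)
      linarith
    set V : Fin N → Set Y := fun i => ((↑) ⁻¹' W i : Set Y) with hV
    have q1 : ∀ i, Metric.diam (V i) ≤ 3 * Metric.diam U := by
      intro i; exact hdV3 i
    refine ⟨N, V, ?_, ?_, ?_⟩
    rotate_left
    exact q1
    rotate_left
    · intro y hy
      have hy' : (y : Z) ∈ ((↑) '' E : Set Z) := ⟨y, hy, rfl⟩
      obtain ⟨i, hi⟩ := mem_iUnion.1 (hW1 hy')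
      exact mem_iUnion.2 ⟨i, hi⟩
    · calc ∑ i, H (Metric.diam ((↑) ⁻¹' W i : Set Y)) ≤ ∑ i : Fin N, H (Metric.diam U) :=
            Finset.sum_le_sum fun i _ => Hm (hdV i)
        _ = N * H (Metric.diam U) := by simp
  · refine D_of_local H Hm Hp H0 1 1 one_pos fun U hU => ?_
    have hd : Metric.diam {y | ∃ z ∈ U, dist y z ≤ Metric.diam U} ≤ Metric.diam U := by
      refine Metric.diam_le_of_forall_dist_le Metric.diam_nonneg ?_
      rintro x ⟨z, hz, hxz⟩ y ⟨w, hw, hyw⟩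
      have h1 := Metric.dist_le_diam_of_mem (Metric.isBounded_of_compactSpace) hz hw
      have h2 : dist x y ≤ max (dist x z) (dist z y) := hult x z y
      have h3 : dist z y ≤ max (dist z w) (dist w y) := hult z w y
      rw [dist_comm w y] at h3
      exact h2.trans (max_le hxz (h3.trans (max_le h1 hyw)))
    refine ⟨1, fun _ => {y | ∃ z ∈ U, dist y z ≤ Metric.diam U}, ?_, fun _ => diam_enl U, ?_⟩
    · intro y hy; exact mem_iUnion.2 ⟨0, hy⟩
    · simp only [Finset.univ_unique, Finset.sum_const, Finset.card_singleton, one_smul, one_mul]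
      exact Hm hd

lemma mkM_apply {K : Type v} [MetricSpace K] [MeasurableSpace K] [BorelSpace K]
    (m : ℝ≥0∞ → ℝ≥0∞) (s : Set K) :
    (Measure.mkMetric m : Measure K) s = (OuterMeasure.mkMetric m : OuterMeasure K) s := by
  rw [← Measure.mkMetric_toOuterMeasure]; rfl

lemma families {Z : Type v} [MetricSpace Z] (Y : Set Z) (h : ℝ≥0 → ℝ≥0∞)
    (hH : PropertyHInf Y h) (hY : IsCompact Y) :
    ∃ T : (ℕ → Bool) → Set Z, (∀ x, IsCompact (T x)) ∧ (∀ x, T x ⊆ Y) ∧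
      (∀ x y, x ≠ y → Disjoint (T x) (T y)) ∧ ∀ x, 0 < hausdorffM h (T x) := by
  obtain ⟨hP, hns⟩ := hH
  have hcY : CompactSpace Y := isCompact_iff_compactSpace.1 hY
  set H : ℝ → ℝ := fun t => (min (h t.toNNReal) 1).toReal with hHdef
  have hfin : ∀ t : ℝ≥0, min (h t) 1 ≠ ⊤ := fun t =>
    ne_top_of_le_ne_top ENNReal.one_ne_top (min_le_right _ _)
  have Hc : Continuous H := by
    refine ENNReal.continuousOn_toReal.comp_continuous
      ((hP.cont.comp continuous_real_toNNReal).min continuous_const) fun t => hfin _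
  have Hm : Monotone H := fun a b hab => ENNReal.toReal_mono (hfin _)
    (min_le_min_right _ (hP.hausdorff.mono (Real.toNNReal_mono hab)))
  have Hp : ∀ t, 0 < t → 0 < H t := fun t ht => ENNReal.toReal_pos
    (lt_min (hP.hausdorff.pos _ (by simpa using ht)) one_pos).ne' (hfin _)
  have H0 : H 0 = 0 := by simp [hHdef, hP.zero]
  set m : ℝ≥0∞ → ℝ≥0∞ := fun d => if d = ⊤ then 1 else ENNReal.ofReal (H d.toReal) with hmdef
  have hm : ∀ d, d ≠ ⊤ → m d = ENNReal.ofReal (H d.toReal) := fun d hd => if_neg hd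
  have hm' : ∀ d, d ≠ ⊤ → m d = min (h d.toNNReal) 1 := by
    intro d hd
    rw [hm d hd]
    simp only [hHdef]
    rw [ENNReal.ofReal_toReal (hfin _), show d.toReal.toNNReal = d.toNNReal from Real.toNNReal_coe]
  have mmono : Monotone m := by
    intro a b hab
    rcases eq_or_ne b ⊤ with rfl | hb
    · have : m ⊤ = 1 := if_pos rfl
      rw [this]
      rcases eq_or_ne a ⊤ with rfl | ha
      · rw [this]
      · rw [hm' a ha]; exact min_le_right _ _
    · have ha := ne_top_of_le_ne_top hb hab
      rw [hm a ha, hm b hb]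
      exact ENNReal.ofReal_le_ofReal (Hm (ENNReal.toReal_mono hb hab))
  have heq : m =ᶠ[𝓝 0] fun d => h d.toNNReal := by
    have h1 : Tendsto (fun d : ℝ≥0∞ => h d.toNNReal) (𝓝 0) (𝓝 0) := by
      have := (hP.cont.tendsto 0).comp (ENNReal.tendsto_toNNReal (a := 0) (by simp))
      rw [hP.zero] at this
      exact this
    filter_upwards [h1.eventually (gt_mem_nhds one_pos), gt_mem_nhds (show (0:ℝ≥0∞) < ⊤ by simp)] with d hd hd2
    rw [hm' d hd2.ne, min_eq_left hd.le]
  have hM : (hausdorffM h : OuterMeasure Z) = OuterMeasure.mkMetric m :=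
    le_antisymm (OuterMeasure.mkMetric_mono heq.symm.le) (OuterMeasure.mkMetric_mono heq.le)
  letI : MeasurableSpace Z := borel Z
  haveI : BorelSpace Z := ⟨rfl⟩
  have htr : ∀ s : Set Y, (Measure.mkMetric m : Measure Y) s = hausdorffM h ((↑) '' s : Set Z) := by
    intro s
    rw [mkM_apply, hM, ← OuterMeasure.isometry_comap_mkMetric m (isometry_subtype_coe (s := Y)) (Or.inl mmono)]
    rfl
  have hK : ¬ SFs m (univ : Set Y) := by
    rintro ⟨A, hA1, hA2⟩
    apply hns
    refine ⟨fun n => (↑) '' (toMeasurable (Measure.mkMetric m : Measure Y) (A n)), fun n => ⟨?_, ?_⟩, ?_⟩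
    · have h1 : MeasurableSet ((↑) '' (toMeasurable (Measure.mkMetric m : Measure Y) (A n)) : Set Z) :=
        hY.isClosed.measurableSet.subtype_image (measurableSet_toMeasurable _ _)
      rw [hM]
      exact (OuterMeasure.mkMetric'_isMetric _).borel_le_caratheodory _ h1
    · rw [← htr, measure_toMeasurable]; exact hA1 n
    · apply Subset.antisymm
      · intro y hy
        obtain ⟨n, hn⟩ := mem_iUnion.1 (hA2 (mem_univ ⟨y, hy⟩))
        exact mem_iUnion.2 ⟨n, ⟨y, hy⟩, subset_toMeasurable _ _ hn, rfl⟩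
      · refine iUnion_subset fun n => ?_
        rintro _ ⟨y, -, rfl⟩
        exact y.2
  obtain ⟨C, hC, hD⟩ := D_prop Y hY h hP.hausdorff.mono hP.hausdorff.pos H
    (fun t => by simp only [hHdef, Real.toNNReal_coe]) Hm Hp H0 hP.alt
  obtain ⟨T, h1, h2, h3⟩ := core H Hc Hm Hp H0 m hm hK C hC hD
  refine ⟨fun x => (↑) '' T x, fun x => (h1 x).image continuous_subtype_val, fun x => ?_, ?_, ?_⟩
  · rintro _ ⟨y, -, rfl⟩
    exact y.2
  · intro x y hxy
    exact (disjoint_image_iff Subtype.val_injective).2 (h2 x y hxy)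
  · intro x
    rw [← htr]; exact h3 x

lemma exists_null {X : Type u} (μ : OuterMeasure X) (κ : Cardinal.{u}) (hκ : κ < 2 ^ Cardinal.aleph0)
    (hA : PropertyA μ κ) (S : (ℕ → Bool) → Set X) (hS : ∀ x, μ.IsCaratheodory (S x))
    (hd : ∀ x y, x ≠ y → Disjoint (S x) (S y)) : ∃ x, μ (S x) = 0 := by
  classical
  obtain ⟨⟨ι, A, hι, hAu, hAm⟩, h2⟩ := hA
  by_contra! hcon
  have hex : ∀ x, ∃ i, μ (S x ∩ A i) ≠ 0 := by
    intro x
    by_contra! h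
    apply hcon x
    have := h2 ι (fun i => S x ∩ A i) hι h
    rwa [← inter_iUnion, hAu, inter_univ] at this
  choose i hi using hex
  have hcount : ∀ j, {x | μ (S x ∩ A j) ≠ 0}.Countable := by
    intro j
    letI : MeasurableSpace X := μ.caratheodory
    set ν := μ.toMeasure le_rfl with hν
    have hSm : ∀ x, MeasurableSet (S x) := hS
    have hAm' : MeasurableSet (A j) := (hAm j).1
    have hfin : IsFiniteMeasure (ν.restrict (A j)) := ⟨by
      rw [Measure.restrict_apply MeasurableSet.univ, univ_inter, hν, toMeasure_apply _ _ hAm']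
      exact (hAm j).2⟩
    have := Measure.countable_meas_pos_of_disjoint_iUnion (μ := ν.restrict (A j)) hSm
      (fun x y hxy => hd x y hxy)
    refine this.mono fun x hx => ?_
    have hx' : μ (S x ∩ A j) ≠ 0 := hx
    change 0 < (ν.restrict (A j)) (S x)
    rw [Measure.restrict_apply (hSm x), hν, toMeasure_apply _ _ ((hSm x).inter hAm')]
    exact pos_iff_ne_zero.2 hx'
  have hinj : ∀ j, ∃ e : {x // μ (S x ∩ A j) ≠ 0} → ℕ, Function.Injective e := fun j => by
    have : Countable {x // μ (S x ∩ A j) ≠ 0} := (hcount j).to_subtype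
    exact exists_injective_nat _
  choose e he using hinj
  let F : ULift.{u} (ℕ → Bool) → ι × ULift.{u} ℕ := fun x => (i x.down, ⟨e _ ⟨x.down, hi x.down⟩⟩)
  have hF : Function.Injective F := by
    rintro ⟨x⟩ ⟨y⟩ hxy
    have h1 : i x = i y := congrArg Prod.fst hxy
    have h2 : e _ ⟨x, hi x⟩ = e _ ⟨y, hi y⟩ := congrArg (fun z => z.2.down) hxy
    have gen : ∀ a b (ha : μ (S x ∩ A a) ≠ 0) (hb : μ (S y ∩ A b) ≠ 0), a = b →
        e a ⟨x, ha⟩ = e b ⟨y, hb⟩ → x = y := by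
      intro a b ha hb hab hh
      subst hab
      exact congrArg Subtype.val (he a hh)
    rw [gen _ _ _ _ h1 h2]
  have hc1 := Cardinal.mk_le_of_injective hF
  have hc2 : Cardinal.mk (ι × ULift.{u} ℕ) < 2 ^ Cardinal.aleph0 := by
    rw [← Cardinal.mul_def, hι]
    refine Cardinal.mul_lt_of_lt (Cardinal.cantor _).le hκ ?_
    simpa using Cardinal.cantor Cardinal.aleph0.{u}
  have hc3 : Cardinal.mk (ULift.{u} (ℕ → Bool)) = 2 ^ Cardinal.aleph0 := by simp
  rw [hc3] at hc1
  exact absurd hc1 (not_le.2 hc2)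

lemma hausdorffM_countable {Z : Type v} [MetricSpace Z] (h : ℝ≥0 → ℝ≥0∞) (h0 : h 0 = 0)
    (s : Set Z) (hs : s.Countable) : hausdorffM h s = 0 := by
  letI : MeasurableSpace Z := borel Z
  haveI : BorelSpace Z := ⟨rfl⟩
  have h1 : ∀ z : Z, hausdorffM h ({z} : Set Z) = 0 := by
    intro z
    unfold hausdorffM
    rw [← mkM_apply]
    have := Measure.mkMetric_le_liminf_tsum (β := ℕ) (ι := fun _ => Unit) ({z} : Set Z) (l := atTop)
      (fun _ => 0) tendsto_const_nhds (fun _ _ => {z}) (by simp)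
      (Eventually.of_forall fun _ x hx => mem_iUnion.2 ⟨(), hx⟩) (fun d => h d.toNNReal)
    refine le_antisymm (this.trans ?_) zero_le
    simp [h0]
  rw [← biUnion_of_singleton s]
  exact (measure_biUnion_null_iff hs).2 fun z _ => h1 z

lemma perfect_aux {X : Type u} [TopologicalSpace X] [T1Space X] {D : Set X} (hD : Perfect D) :
    PerfectSet D := by
  refine ⟨hD.closed, fun O hO hne hfin => ?_⟩
  obtain ⟨x, hxO, hxD⟩ := hne
  have hacc := accPt_iff_nhds.1 (hD.acc x hxD)
  have hfc : IsClosed ((O ∩ D) \ {x}) := (hfin.subset sdiff_subset).isClosed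
  obtain ⟨y, ⟨⟨hy1, hy2⟩, hy3⟩, hy4⟩ := hacc (O ∩ ((O ∩ D) \ {x})ᶜ)
    ((hO.inter hfc.isOpen_compl).mem_nhds ⟨hxO, fun h => h.2 rfl⟩)
  exact hy2 ⟨⟨hy1, hy3⟩, hy4⟩

/-- Theorem `Compact target`. -/
theorem statement_6 {X : Type u} {Z : Type v} [MetricSpace Z]
    (μ : MeasureTheory.OuterMeasure X)
    (κ : Cardinal.{u}) (hκ : κ < 2 ^ Cardinal.aleph0)
    (hA : PropertyA μ κ)
    (Y : Set Z) (h : ℝ≥0 → ℝ≥0∞) (hH : PropertyHInf Y h) (hYcomp : IsCompact Y)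
    (f : X → Z) (hrange : Set.range f = Y)
    (hmeas : ∀ O : Set Z, IsOpen O → μ.IsCaratheodory (f ⁻¹' O)) :
    (∃ N : Set X, μ N = 0 ∧ 0 < hausdorffM h (f '' N)) ∧
    (∀ tX : TopologicalSpace X, @SecondCountableTopology X tX →
      @T1Space X tX →
      (∀ F : Set Z, IsClosed F →
        ∃ C : ℕ → Set X, (∀ n, @IsClosed X tX (C n)) ∧ f ⁻¹' F = ⋃ n, C n) →
      ∃ N : Set X, @PerfectSet X tX N ∧ μ N = 0 ∧ 0 < hausdorffM h (f '' N)) := by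
  obtain ⟨T, hT1, hT2, hT3, hT4⟩ := families Y h hH hYcomp
  have hcar : ∀ x, μ.IsCaratheodory (f ⁻¹' T x) := by
    intro x
    have := hmeas _ (hT1 x).isClosed.isOpen_compl
    rw [preimage_compl] at this
    exact (OuterMeasure.isCaratheodory_compl_iff μ).1 this
  obtain ⟨x, hx⟩ := exists_null μ κ hκ hA (fun x => f ⁻¹' T x) hcar
    (fun x y hxy => (hT3 x y hxy).preimage f)
  have him : f '' (f ⁻¹' T x) = T x := by
    rw [image_preimage_eq_inter_range, hrange]
    exact inter_eq_left.2 (hT2 x)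
  refine ⟨⟨f ⁻¹' T x, hx, by rw [him]; exact hT4 x⟩, ?_⟩
  intro tX hsc ht1 hF
  obtain ⟨C, hC1, hC2⟩ := hF (T x) (hT1 x).isClosed
  have hex : ∃ n, hausdorffM h (f '' C n) ≠ 0 := by
    by_contra! hcon
    have h1 : hausdorffM h (⋃ n, f '' C n) = 0 := measure_iUnion_null hcon
    rw [← image_iUnion, ← hC2, him] at h1
    exact (hT4 x).ne' h1
  obtain ⟨n, hn⟩ := hex
  obtain ⟨V, D, hV, hD, hVD⟩ := exists_countable_union_perfect_of_isClosed (hC1 n)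
  have hDsub : D ⊆ f ⁻¹' T x := by
    rw [hC2]
    exact (subset_union_right.trans hVD.ge).trans (subset_iUnion C n)
  refine ⟨D, perfect_aux hD, le_antisymm ((measure_mono hDsub).trans hx.le) zero_le, ?_⟩
  refine pos_iff_ne_zero.2 fun h0 => hn ?_
  rw [hVD, image_union]
  exact measure_union_null (hausdorffM_countable h hH.1.zero _ (hV.image f)) h0
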